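/- arXiv:2106.01281 — 3 statements merged into one kernel-verified Lean document; each statement's English description precedes it below -/
import Mathlib

section
/- Let φ : X → (−∞, ∞] be proper, quasiconvex, σ(X, X*)-lower semicontinuous, and law invariant. Then the following are equivalent: (i) φ is an affine function of the expectation, i.e. there exist a, b ∈ ℝ with φ(X) = a E[X] + b for all X ∈ X; (ii) there exist a ∈ ℝ and a nonconstant Z ∈ X with E[Z] ≠ 0 such that φ(X + tZ) = φ(X) + a t for all X ∈ X and t ∈ ℝ; (iii) there exist a ∈ ℝ and a nonconstant Z ∈ X with E[Z] ≠ 0 such that φ(x + tZ) = φ(x) + a t for all constants x ∈ ℝ and all t ∈ ℝ. -/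
/-!
The implications from the affine form to translation invariance along `Z`, and from there to
translation invariance at constants, are direct; an indicator function serves as `Z`.

For the converse, two facts about an atomless space carry the argument, both resting on the
existence of random variables with prescribed law (`IsAtomless.exists_map_eq`).

* For integrable `X` and `Y`, some copy `X'` of `X` has `E[X' Y] ≥ E[X] E[Y]`, by averaging over
  rotations of a circle-valued uniform variable (`IsAtomless.exists_sameLaw_integral_mul_ge`).
  Separating a point from a sublevel set of `φ` in the weak topology then gives `φ(E[X]) ≤ φ(X)`
  (`apply_integral_le`).
* If `Z` and `Y` are nonconstant, `E[Z' Y]` depends on the copy `Z'` of `Z`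
  (`IsAtomless.exists_sameLaw_integral_mul_lt`). Hence a weakly closed convex law-invariant set
  containing a line `x + t (Z - E[Z])` contains every variable of mean `x` (`apply_le_of_line`).

By the first fact, `φ(x + t E[Z]) ≤ φ(x + t Z) = φ(x) + a t`. Using this for `t` and `-t` shows that
`φ` is affine with slope `a / E[Z]` on constants, and finite there because `φ` is proper. It remains
to show `φ(X) = φ(E[X])`: one inequality is the first fact, and the other is the second one, applied
to the sublevel set at level `φ(E[X])`, which contains all `x + t Z` of mean `E[X]`.
-/

open MeasureTheory Set List
open scoped ENNReal NNReal

noncomputable section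

namespace Collapse

variable {Ω : Type*} [MeasurableSpace Ω]

/-- A measure is atomless (nonatomic) if every set of positive measure contains a
measurable subset of strictly smaller positive measure. -/
def IsAtomless (P : Measure Ω) : Prop :=
  ∀ A : Set Ω, MeasurableSet A → 0 < P A →
    ∃ B : Set Ω, MeasurableSet B ∧ B ⊆ A ∧ 0 < P B ∧ P B < P A

/-- `X` and `Y` have the same law under `P`. -/
def SameLaw (P : Measure Ω) (X Y : Ω → ℝ) : Prop :=
  Measure.map X P = Measure.map Y P

/-- `X` is not `P`-a.s. equal to a constant. -/
def Nonconstant (P : Measure Ω) (X : Ω → ℝ) : Prop :=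
  ∀ c : ℝ, ¬ X =ᵐ[P] (fun _ => c)

/-- `X` and `Y` are comonotone:
`P(X ≤ x, Y ≤ y) = min (P(X ≤ x)) (P(Y ≤ y))` for all `x y`. -/
def Comonotone (P : Measure Ω) (X Y : Ω → ℝ) : Prop :=
  ∀ x y : ℝ,
    P ({ω | X ω ≤ x} ∩ {ω | Y ω ≤ y}) = min (P {ω | X ω ≤ x}) (P {ω | Y ω ≤ y})

/-- `X` and `Y` are antimonotone:
`P(X ≤ x, Y ≤ y) = max (P(X ≤ x) + P(Y ≤ y) - 1) 0` for all `x y`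
(in `ℝ≥0∞`, truncated subtraction realises the `max` with `0`). -/
def Antimonotone (P : Measure Ω) (X Y : Ω → ℝ) : Prop :=
  ∀ x y : ℝ,
    P ({ω | X ω ≤ x} ∩ {ω | Y ω ≤ y}) = (P {ω | X ω ≤ x} + P {ω | Y ω ≤ y}) - 1

/-- `q` is a quantile function of `X` under `P`. -/
def IsQuantile (P : Measure Ω) (X : Ω → ℝ) (q : ℝ → ℝ) : Prop :=
  ∀ s ∈ Set.Ioo (0:ℝ) 1,
    sInf {x : ℝ | s ≤ (P {ω | X ω ≤ x}).toReal} ≤ q s ∧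
    q s ≤ sInf {x : ℝ | s < (P {ω | X ω ≤ x}).toReal}

/-- `X` belongs to `L^∞(P)`: measurable and essentially bounded. -/
def MemLinf (P : Measure Ω) (X : Ω → ℝ) : Prop :=
  Measurable X ∧ ∃ M : ℝ, ∀ᵐ ω ∂P, |X ω| ≤ M

/-- A pair `(𝒳, 𝒳*)` of law-invariant vector subspaces of `L¹(P)` containing `L^∞(P)`
such that `X * Y ∈ L¹(P)` for all `X ∈ 𝒳`, `Y ∈ 𝒳*` (Assumption 2.1). -/
structure PairedSpaces (P : Measure Ω) where
  carrier : Set (Ω → ℝ)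
  dual : Set (Ω → ℝ)
  meas_carrier : ∀ X ∈ carrier, Measurable X
  meas_dual : ∀ Y ∈ dual, Measurable Y
  int_carrier : ∀ X ∈ carrier, Integrable X P
  int_dual : ∀ Y ∈ dual, Integrable Y P
  smul_carrier : ∀ X ∈ carrier, ∀ c : ℝ, (fun ω => c * X ω) ∈ carrier
  add_carrier : ∀ X ∈ carrier, ∀ X' ∈ carrier, (fun ω => X ω + X' ω) ∈ carrier
  smul_dual : ∀ Y ∈ dual, ∀ c : ℝ, (fun ω => c * Y ω) ∈ dual
  add_dual : ∀ Y ∈ dual, ∀ Y' ∈ dual, (fun ω => Y ω + Y' ω) ∈ dual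
  linf_carrier : ∀ X : Ω → ℝ, MemLinf P X → X ∈ carrier
  linf_dual : ∀ Y : Ω → ℝ, MemLinf P Y → Y ∈ dual
  lawinv_carrier : ∀ X ∈ carrier, ∀ X' : Ω → ℝ, Measurable X' → SameLaw P X' X → X' ∈ carrier
  lawinv_dual : ∀ Y ∈ dual, ∀ Y' : Ω → ℝ, Measurable Y' → SameLaw P Y' Y → Y' ∈ dual
  mul_int : ∀ X ∈ carrier, ∀ Y ∈ dual, Integrable (fun ω => X ω * Y ω) P

/-- A subset `C` of `𝒳` is closed in the weak topology `σ(𝒳, 𝒳*)`, i.e. the topology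
on `𝒳` induced by the linear functionals `X ↦ E[X Y]`, `Y ∈ 𝒳*`. -/
def WeakClosed (P : Measure Ω) (pr : PairedSpaces P) (C : Set (Ω → ℝ)) : Prop :=
  @IsClosed ↥pr.carrier
    (TopologicalSpace.induced
      (fun X : ↥pr.carrier => (fun Y : ↥pr.dual => ∫ ω, (X : Ω → ℝ) ω * (Y : Ω → ℝ) ω ∂P))
      Pi.topologicalSpace)
    {X : ↥pr.carrier | (X : Ω → ℝ) ∈ C}

/-- `φ` is `σ(𝒳, 𝒳*)`-lower semicontinuous: every sublevel set is `σ(𝒳, 𝒳*)`-closed. -/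
def WeakLSC (P : Measure Ω) (pr : PairedSpaces P) (φ : (Ω → ℝ) → EReal) : Prop :=
  ∀ m : ℝ, WeakClosed P pr {X | X ∈ pr.carrier ∧ φ X ≤ (m : EReal)}

/-- The (upper) support functional `σ_C(Y) = sup_{X ∈ C} E[XY]`. -/
def suppFn (P : Measure Ω) (C : Set (Ω → ℝ)) (Y : Ω → ℝ) : EReal :=
  ⨆ X ∈ C, ((∫ ω, X ω * Y ω ∂P : ℝ) : EReal)

/-- The conjugate functional `φ*(Y) = sup_{X ∈ 𝒳} (E[XY] - φ(X))`. -/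
def conj (P : Measure Ω) (𝒳 : Set (Ω → ℝ)) (φ : (Ω → ℝ) → EReal) (Y : Ω → ℝ) : EReal :=
  ⨆ X ∈ 𝒳, (((∫ ω, X ω * Y ω ∂P : ℝ) : EReal) - φ X)

/-- The recession cone `C^∞ = {X ∈ 𝒳 : {X} + C ⊆ C}`. -/
def recCone (𝒳 C : Set (Ω → ℝ)) : Set (Ω → ℝ) :=
  {X | X ∈ 𝒳 ∧ ∀ U ∈ C, (fun ω => X ω + U ω) ∈ C}

/-- A functional on `𝒳` is law invariant. -/
def LawInvariantFn (P : Measure Ω) (𝒳 : Set (Ω → ℝ)) (φ : (Ω → ℝ) → EReal) : Prop :=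
  ∀ X ∈ 𝒳, ∀ Y ∈ 𝒳, SameLaw P X Y → φ X = φ Y

/-- A set of random variables is law invariant. -/
def LawInvariantSet (P : Measure Ω) (C : Set (Ω → ℝ)) : Prop :=
  ∀ X ∈ C, ∀ Y : Ω → ℝ, Measurable Y → SameLaw P Y X → Y ∈ C

/-- A functional on `𝒳` is expectation invariant. -/
def ExpectationInvariantFn (P : Measure Ω) (𝒳 : Set (Ω → ℝ)) (φ : (Ω → ℝ) → EReal) : Prop :=
  ∀ X ∈ 𝒳, ∀ Y ∈ 𝒳, (∫ ω, X ω ∂P) = (∫ ω, Y ω ∂P) → φ X = φ Y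

/-- Convexity of a functional `φ : 𝒳 → (-∞, ∞]`. -/
def ConvexFn (𝒳 : Set (Ω → ℝ)) (φ : (Ω → ℝ) → EReal) : Prop :=
  ∀ X ∈ 𝒳, ∀ Y ∈ 𝒳, ∀ l : ℝ, l ∈ Set.Icc (0:ℝ) 1 →
    φ (fun ω => l * X ω + (1 - l) * Y ω) ≤ (l : EReal) * φ X + ((1 - l : ℝ) : EReal) * φ Y

/-- Quasiconvexity of a functional `φ : 𝒳 → (-∞, ∞]`. -/
def QuasiconvexFn (𝒳 : Set (Ω → ℝ)) (φ : (Ω → ℝ) → EReal) : Prop :=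
  ∀ X ∈ 𝒳, ∀ Y ∈ 𝒳, ∀ l : ℝ, l ∈ Set.Icc (0:ℝ) 1 →
    φ (fun ω => l * X ω + (1 - l) * Y ω) ≤ max (φ X) (φ Y)

/-- Convexity of a set of random variables. -/
def ConvexSet (C : Set (Ω → ℝ)) : Prop :=
  ∀ X ∈ C, ∀ Y ∈ C, ∀ l : ℝ, l ∈ Set.Icc (0:ℝ) 1 →
    (fun ω => l * X ω + (1 - l) * Y ω) ∈ C

/-- The expectation of `Z` as an extended real number,
`E[Z] = ∫ Z⁺ dP - ∫ Z⁻ dP` computed in `EReal`. -/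
def eExp (P : Measure Ω) (Z : Ω → ℝ) : EReal :=
  ((∫⁻ ω, ENNReal.ofReal (Z ω) ∂P : ℝ≥0∞) : EReal) -
    ((∫⁻ ω, ENNReal.ofReal (-(Z ω)) ∂P : ℝ≥0∞) : EReal)

/-- `X` dominates `Y` in the increasing convex (second-order stochastic dominance) sense:
`E[f(X)] ≥ E[f(Y)]` for every nondecreasing convex `f : ℝ → ℝ`. -/
def SSDdom (P : Measure Ω) (X Y : Ω → ℝ) : Prop :=
  ∀ f : ℝ → ℝ, Monotone f → ConvexOn ℝ Set.univ f →
    eExp P (fun ω => f (Y ω)) ≤ eExp P (fun ω => f (X ω))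

/-- A consistent risk measure on `𝒳`: a proper, cash-additive, normalised functional
that is consistent with second-order stochastic dominance. -/
def IsConsistentRM (P : Measure Ω) (𝒳 : Set (Ω → ℝ)) (φ : (Ω → ℝ) → EReal) : Prop :=
  (∀ X ∈ 𝒳, φ X ≠ (⊥ : EReal)) ∧
  (∃ X ∈ 𝒳, φ X ≠ (⊤ : EReal)) ∧
  (∀ X ∈ 𝒳, ∀ m : ℝ, φ (fun ω => X ω + m) = φ X + (m : EReal)) ∧
  (∀ X ∈ 𝒳, ∀ Y ∈ 𝒳, SSDdom P X Y → φ Y ≤ φ X) ∧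
  φ (fun _ => (0:ℝ)) = (0 : EReal)

/-- A capacity on `(Ω, F)`. -/
structure Capacity (Ω : Type*) [MeasurableSpace Ω] where
  toFun : Set Ω → ℝ
  empty' : toFun ∅ = 0
  univ' : toFun Set.univ = 1
  mono' : ∀ ⦃A B : Set Ω⦄, MeasurableSet A → MeasurableSet B → A ⊆ B → toFun A ≤ toFun B
  nonneg' : ∀ A : Set Ω, MeasurableSet A → 0 ≤ toFun A
  le_one' : ∀ A : Set Ω, MeasurableSet A → toFun A ≤ 1

/-- A capacity is coherent if it is the upper envelope of a family of probability measures. -/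
def Capacity.Coherent (ν : Capacity Ω) : Prop :=
  ∃ Q : Set (Measure Ω), Q.Nonempty ∧ (∀ m ∈ Q, IsProbabilityMeasure m) ∧
    ∀ A : Set Ω, MeasurableSet A → ν.toFun A = ⨆ m ∈ Q, (m A).toReal

/-- A capacity is law invariant (with respect to `P`). -/
def Capacity.LawInvariant (P : Measure Ω) (μ : Capacity Ω) : Prop :=
  ∀ A B : Set Ω, MeasurableSet A → MeasurableSet B → P A = P B → μ.toFun A = μ.toFun B

/-- `μ` is the Jaffray-Philippe capacity represented by the pair `(ν, α)`:
`μ = α ν + (1 - α) ν̄` with `ν` coherent and `α ∈ [0,1]`,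
where `ν̄(A) = 1 - ν(Aᶜ)` is the dual capacity. -/
def IsJPRep (μ ν : Capacity Ω) (α : ℝ) : Prop :=
  ν.Coherent ∧ α ∈ Set.Icc (0:ℝ) 1 ∧
    ∀ A : Set Ω, MeasurableSet A → μ.toFun A = α * ν.toFun A + (1 - α) * (1 - ν.toFun Aᶜ)

/-- The Choquet integral `E_μ[X] = ∫_{-∞}^0 (μ(X > s) - 1) ds + ∫_0^∞ μ(X > s) ds`. -/
def choquet (μ : Capacity Ω) (X : Ω → ℝ) : ℝ :=
  (∫ s in Set.Iio (0:ℝ), (μ.toFun {ω | s < X ω} - 1)) +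
    ∫ s in Set.Ici (0:ℝ), μ.toFun {ω | s < X ω}

/-- `X` is an optimal solution of: maximise `φ` over `C` subject to `E[D X] = p`. -/
def IsOptimal (P : Measure Ω) (φ : (Ω → ℝ) → EReal) (C : Set (Ω → ℝ)) (D : Ω → ℝ)
    (p : ℝ) (X : Ω → ℝ) : Prop :=
  X ∈ C ∧ (∫ ω, D ω * X ω ∂P) = p ∧
    ∀ X' ∈ C, (∫ ω, D ω * X' ω ∂P) = p → φ X' ≤ φ X

/-- A set of random variables is increasing. -/
def IncreasingSet (C : Set (Ω → ℝ)) : Prop :=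
  ∀ X ∈ C, ∀ m : ℝ, 0 ≤ m → (fun ω => X ω + m) ∈ C

/-- `φ` is weakly increasing: `φ(X + m) ≥ φ(X)` for `m ≥ 0`. -/
def WeaklyIncreasingFn (𝒳 : Set (Ω → ℝ)) (φ : (Ω → ℝ) → EReal) : Prop :=
  ∀ X ∈ 𝒳, ∀ m : ℝ, 0 ≤ m → φ X ≤ φ (fun ω => X ω + m)

/-- `φ` is increasing: `φ(X + m) > φ(X)` whenever `φ(X) ∈ ℝ` and `m > 0`. -/
def IncreasingFn (𝒳 : Set (Ω → ℝ)) (φ : (Ω → ℝ) → EReal) : Prop :=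
  ∀ X ∈ 𝒳, (φ X ≠ (⊤ : EReal) ∧ φ X ≠ (⊥ : EReal)) → ∀ m : ℝ, 0 < m →
    φ X < φ (fun ω => X ω + m)

/-! ### Atomless probability spaces -/

section Atomless

variable {P : Measure Ω}

lemma IsAtomless.exists_small [IsFiniteMeasure P] (hP : IsAtomless P) {A : Set Ω}
    (hA : MeasurableSet A) (hpos : 0 < P.real A) {ε : ℝ} (hε : 0 < ε) :
    ∃ B, MeasurableSet B ∧ B ⊆ A ∧ 0 < P.real B ∧ P.real B ≤ ε := by
  have key : ∀ n : ℕ, ∃ B, MeasurableSet B ∧ B ⊆ A ∧ 0 < P.real B ∧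
      P.real B ≤ P.real A * (1 / 2) ^ n := by
    intro n
    induction n with
    | zero => exact ⟨A, hA, Subset.rfl, hpos, by simp⟩
    | succ n ih =>
      obtain ⟨B, hB, hBA, hB0, hBle⟩ := ih
      obtain ⟨C, hC, hCB, hC0, hClt⟩ := hP B hB (ENNReal.toReal_pos_iff.1 hB0).1
      have hC0' : 0 < P.real C := ENNReal.toReal_pos hC0.ne' (by finiteness)
      have hClt' : P.real C < P.real B :=
        (ENNReal.toReal_lt_toReal (by finiteness) (by finiteness)).2 hClt
      have hdiff : P.real (B \ C) = P.real B - P.real C := measureReal_sdiff hCB hC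
      rw [pow_succ]
      by_cases h : P.real C ≤ P.real B / 2
      · exact ⟨C, hC, hCB.trans hBA, hC0', by linarith⟩
      · exact ⟨B \ C, hB.diff hC, sdiff_subset.trans hBA, by linarith, by linarith⟩
  obtain ⟨n, hn⟩ := exists_pow_lt_of_lt_one (show 0 < ε / P.real A by positivity)
    (show (1 / 2 : ℝ) < 1 by norm_num)
  obtain ⟨B, hB, hBA, hB0, hBle⟩ := key n
  refine ⟨B, hB, hBA, hB0, hBle.trans ?_⟩
  rw [lt_div_iff₀ hpos] at hn
  linarith

/-- Sierpiński's theorem: an atomless finite measure takes all values in `[0, P A]` on the measurable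
subsets of `A`. A greedy sequence of sets, each adding at least half of what can be added without
exceeding `m`, exhausts `m`. -/
lemma IsAtomless.exists_subset_eq [IsFiniteMeasure P] (hP : IsAtomless P) {A : Set Ω}
    (hA : MeasurableSet A) {m : ℝ} (hm0 : 0 ≤ m) (hm : m ≤ P.real A) :
    ∃ B, MeasurableSet B ∧ B ⊆ A ∧ P.real B = m := by
  -- `S` holds the admissible sets; `B'` enlarges `B` by at least half of any admissible increment `E`
  let S := {B : Set Ω // MeasurableSet B ∧ B ⊆ A ∧ P.real B ≤ m}
  have step : ∀ B : S, ∃ B' : S, B.1 ⊆ B'.1 ∧ ∀ E, MeasurableSet E → E ⊆ A \ B.1 →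
      P.real B.1 + P.real E ≤ m → P.real E ≤ 2 * (P.real B'.1 - P.real B.1) := by
    rintro ⟨B, hB, hBA, hBm⟩
    let T : Set ℝ := {r | ∃ E, MeasurableSet E ∧ E ⊆ A \ B ∧ P.real B + P.real E ≤ m ∧
      r = P.real E}
    have hbdd : BddAbove T := ⟨m, by
      rintro r ⟨E, -, -, h, rfl⟩
      have := measureReal_nonneg (μ := P) (s := B)
      linarith⟩
    have hT0 : (0 : ℝ) ∈ T := ⟨∅, by simp, by simp, by simpa using hBm, by simp⟩
    have hs0 : 0 ≤ sSup T := le_csSup hbdd hT0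
    obtain ⟨r, ⟨E, hE, hEA, hEm, rfl⟩, hr⟩ : ∃ r ∈ T, sSup T / 2 ≤ r := by
      rcases hs0.eq_or_lt with h | h
      · exact ⟨0, hT0, by rw [← h]; simp⟩
      · obtain ⟨r, hr, hlt⟩ := exists_lt_of_lt_csSup ⟨0, hT0⟩ (half_lt_self h)
        exact ⟨r, hr, hlt.le⟩
    have hdisj : Disjoint B E := disjoint_left.2 fun x hx hxE => (hEA hxE).2 hx
    have hun : P.real (B ∪ E) = P.real B + P.real E := measureReal_union hdisj hE
    refine ⟨⟨B ∪ E, hB.union hE, union_subset hBA (hEA.trans sdiff_subset), hun ▸ hEm⟩,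
      subset_union_left, fun E' hE' hE'A hE'm => ?_⟩
    have : P.real E' ≤ sSup T := le_csSup hbdd ⟨E', hE', hE'A, hE'm, rfl⟩
    simp only [hun]
    linarith
  choose F hFsub hF using step
  let s : ℕ → S := fun n => F^[n] ⟨∅, by simp, by simp, by simpa using hm0⟩
  have hs : ∀ n, s (n + 1) = F (s n) := fun n => Function.iterate_succ_apply' _ _ _
  have hmono : Monotone fun n => (s n).1 :=
    monotone_nat_of_le_succ fun n => by rw [hs]; exact hFsub _
  let B := ⋃ n, (s n).1
  have hBmeas : MeasurableSet B := MeasurableSet.iUnion fun n => (s n).2.1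
  have hBA : B ⊆ A := iUnion_subset fun n => (s n).2.2.1
  have htend : Filter.Tendsto (fun n => P.real (s n).1) Filter.atTop (nhds (P.real B)) :=
    (ENNReal.tendsto_toReal (by finiteness)).comp (tendsto_measure_iUnion_atTop hmono)
  have hBm : P.real B ≤ m := le_of_tendsto' htend fun n => (s n).2.2.2
  refine ⟨B, hBmeas, hBA, hBm.antisymm ?_⟩
  by_contra! hlt
  have hdiff : P.real (A \ B) = P.real A - P.real B := measureReal_sdiff hBA hBmeas
  obtain ⟨E, hE, hEA, hE0, hEle⟩ := hP.exists_small (hA.diff hBmeas)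
    (by linarith) (sub_pos.2 hlt)
  have hle : ∀ n, P.real E ≤ 2 * (P.real (s (n + 1)).1 - P.real (s n).1) := by
    intro n
    have hsub : (s n).1 ⊆ B := subset_iUnion (fun n => (s n).1) n
    have := measureReal_mono (μ := P) hsub
    rw [hs]
    exact hF _ E hE (hEA.trans (sdiff_subset_sdiff_right hsub)) (by linarith)
  have hlim : Filter.Tendsto (fun n => 2 * (P.real (s (n + 1)).1 - P.real (s n).1))
      Filter.atTop (nhds (2 * (P.real B - P.real B))) :=
    ((htend.comp (Filter.tendsto_add_atTop_nat 1)).sub htend).const_mul 2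
  have := ge_of_tendsto' hlim hle
  linarith

/-- Refinement of a partition into `2 ^ n` cells `{f = k}` of equal probability: every cell is cut
in two halves, numbered `2 k` and `2 k + 1`. -/
lemma IsAtomless.exists_dyadic_step [IsProbabilityMeasure P] (hP : IsAtomless P) (n : ℕ)
    (f : Ω → ℕ) (hf : Measurable f)
    (hfP : ∀ k ≤ 2 ^ n, P.real {ω | f ω < k} = k / 2 ^ n) :
    ∃ f' : Ω → ℕ, Measurable f' ∧ (∀ ω, 2 * f ω ≤ f' ω ∧ f' ω ≤ 2 * f ω + 1) ∧
      ∀ k ≤ 2 ^ (n + 1), P.real {ω | f' ω < k} = k / 2 ^ (n + 1) := by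
  have hmeas : ∀ k, MeasurableSet {ω | f ω < k} := fun k => hf measurableSet_Iio
  have hmid : ∀ k, ∃ C, MeasurableSet C ∧ {ω | f ω < k} ⊆ C ∧ C ⊆ {ω | f ω < k + 1} ∧
      (k < 2 ^ n → P.real C = (2 * k + 1 : ℝ) / 2 ^ (n + 1)) := by
    intro k
    have hsub : {ω | f ω < k} ⊆ {ω | f ω < k + 1} := fun ω h => Nat.lt_succ_of_lt h
    by_cases hk : k < 2 ^ n
    · have h1 := hfP k hk.le
      have h2 := hfP (k + 1) hk
      have hd : P.real ({ω | f ω < k + 1} \ {ω | f ω < k}) = 1 / 2 ^ n := by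
        rw [measureReal_sdiff hsub (hmeas k), h1, h2]
        push_cast
        ring
      obtain ⟨B, hB, hBsub, hBeq⟩ := hP.exists_subset_eq
        ((hmeas (k + 1)).diff (hmeas k)) (m := 1 / 2 ^ (n + 1)) (by positivity) (by
          rw [hd, pow_succ]
          gcongr
          nlinarith [show (0 : ℝ) < 2 ^ n by positivity])
      refine ⟨{ω | f ω < k} ∪ B, (hmeas k).union hB, subset_union_left,
        union_subset hsub (hBsub.trans sdiff_subset), fun _ => ?_⟩
      rw [measureReal_union (disjoint_left.2 fun x hx hxB => (hBsub hxB).2 hx) hB, h1, hBeq, pow_succ]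
      field_simp
    · exact ⟨_, hmeas k, Subset.rfl, hsub, fun h => absurd h hk⟩
  -- the new numbering is `2 f` on the first half `C k` of the cell `k`, and `2 f + 1` on the second
  choose C hC hC1 hC2 hCP using hmid
  have hset : {ω | ω ∈ C (f ω)} = ⋃ k, ({ω | f ω = k} ∩ C k) := by
    ext ω; simp
  have hCmeas : MeasurableSet {ω | ω ∈ C (f ω)} := by
    rw [hset]
    exact MeasurableSet.iUnion fun k => (hf (measurableSet_singleton k)).inter (hC k)
  classical
  refine ⟨fun ω => if ω ∈ C (f ω) then 2 * f ω else 2 * f ω + 1,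
    Measurable.ite hCmeas (by fun_prop) (by fun_prop), fun ω => ?_, fun k hk => ?_⟩
  · dsimp only
    split_ifs <;> omega
  · rcases Nat.even_or_odd' k with ⟨j, rfl | rfl⟩
    · have : {ω | (if ω ∈ C (f ω) then 2 * f ω else 2 * f ω + 1) < 2 * j} = {ω | f ω < j} := by
        ext ω
        simp only [mem_ofPred_eq]
        split_ifs <;> omega
      rw [this, hfP j (by rw [pow_succ] at hk; omega)]
      push_cast
      rw [pow_succ]
      field_simp
    · have : {ω | (if ω ∈ C (f ω) then 2 * f ω else 2 * f ω + 1) < 2 * j + 1} = C j := by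
        ext ω
        simp only [mem_ofPred_eq]
        constructor
        · intro h
          rcases lt_trichotomy (f ω) j with h' | h' | h'
          · exact hC1 j h'
          · split_ifs at h with h''
            · exact h' ▸ h''
            · omega
          · split_ifs at h <;> omega
        · intro h
          have h1 : f ω < j + 1 := hC2 j h
          rcases (Nat.lt_succ_iff.1 h1).eq_or_lt with h2 | h2
          · rw [← h2] at h
            rw [if_pos h]
            omega
          · split_ifs <;> omega
      rw [this, hCP j (by rw [pow_succ] at hk; omega)]
      push_cast
      rfl

/-- An atomless probability space carries a uniform variable: the limit of `f n / 2 ^ n`, where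
`f n` numbers the cells of successively refined dyadic partitions. -/
lemma IsAtomless.exists_uniform [IsProbabilityMeasure P] (hP : IsAtomless P) :
    ∃ U : Ω → unitInterval, Measurable U ∧ P.map U = volume := by
  let S (n : ℕ) := {f : Ω → ℕ // Measurable f ∧
    ∀ k ≤ 2 ^ n, P.real {ω | f ω < k} = k / 2 ^ n}
  have step : ∀ n (f : S n), ∃ f' : S (n + 1),
      ∀ ω, 2 * f.1 ω ≤ f'.1 ω ∧ f'.1 ω ≤ 2 * f.1 ω + 1 := by
    rintro n ⟨f, hf, hfP⟩
    obtain ⟨f', hf', h1, h2⟩ := hP.exists_dyadic_step n f hf hfP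
    exact ⟨⟨f', hf', h2⟩, h1⟩
  choose F hF using step
  let f0 : S 0 := ⟨fun _ => 0, measurable_const, fun k hk => by
    have : k = 0 ∨ k = 1 := by simp at hk; omega
    rcases this with rfl | rfl <;> simp⟩
  let f : ∀ n, S n := fun n => Nat.rec f0 (fun n g => F n g) n
  have hf : ∀ n ω, 2 * (f n).1 ω ≤ (f (n + 1)).1 ω ∧ (f (n + 1)).1 ω ≤ 2 * (f n).1 ω + 1 :=
    fun n ω => hF n (f n) ω
  let a : Ω → ℕ → ℝ := fun ω n => (f n).1 ω / 2 ^ n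
  let b : Ω → ℕ → ℝ := fun ω n => ((f n).1 ω + 1) / 2 ^ n
  have ha : ∀ ω, Monotone (a ω) := fun ω => monotone_nat_of_le_succ fun n => by
    have h : (2 * (f n).1 ω : ℝ) ≤ (f (n + 1)).1 ω := by exact_mod_cast (hf n ω).1
    simp only [a, pow_succ]
    rw [div_le_div_iff₀ (by positivity) (by positivity)]
    nlinarith [show (0 : ℝ) < 2 ^ n by positivity]
  have hb : ∀ ω, Antitone (b ω) := fun ω => antitone_nat_of_succ_le fun n => by
    have h : ((f (n + 1)).1 ω : ℝ) ≤ 2 * (f n).1 ω + 1 := by exact_mod_cast (hf n ω).2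
    simp only [b, pow_succ]
    rw [div_le_div_iff₀ (by positivity) (by positivity)]
    nlinarith [show (0 : ℝ) < 2 ^ n by positivity]
  have hab : ∀ ω n, a ω n ≤ b ω n := fun ω n => by
    simp only [a, b]
    gcongr
    linarith
  have hab' : ∀ ω m n, a ω m ≤ b ω n := fun ω m n =>
    ((ha ω (le_max_left m n)).trans (hab ω _)).trans (hb ω (le_max_right m n))
  have hbdd : ∀ ω, BddAbove (range (a ω)) := fun ω => ⟨b ω 0, by
    rintro _ ⟨m, rfl⟩
    exact hab' ω m 0⟩
  let u : Ω → ℝ := fun ω => ⨆ n, a ω n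
  have hau : ∀ ω n, a ω n ≤ u ω := fun ω n => le_ciSup (hbdd ω) n
  have hub : ∀ ω n, u ω ≤ b ω n := fun ω n => ciSup_le fun m => hab' ω m n
  have hu : Measurable u := Measurable.iSup fun n =>
    ((measurable_from_nat (f := fun k : ℕ => (k : ℝ))).comp (f n).2.1).div_const _
  have huI : ∀ ω, u ω ∈ unitInterval := fun ω =>
    ⟨by simpa [a, f, f0] using hau ω 0, by simpa [b, f, f0] using hub ω 0⟩
  refine ⟨fun ω => ⟨u ω, huI ω⟩, hu.subtype_mk, ?_⟩
  have hUm : Measurable fun ω => (⟨u ω, huI ω⟩ : unitInterval) := hu.subtype_mk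
  have := Measure.isProbabilityMeasure_map (μ := P) hUm.aemeasurable
  refine Measure.ext_of_Iic _ _ fun x => ?_
  rw [Measure.map_apply hUm measurableSet_Iic, unitInterval.volume_Iic]
  have hpre : (fun ω => (⟨u ω, huI ω⟩ : unitInterval)) ⁻¹' Iic x = {ω | u ω ≤ x.1} := rfl
  rw [hpre]
  rcases x.2.2.eq_or_lt with hx1 | hx1
  · have : {ω | u ω ≤ x.1} = univ := eq_univ_of_forall fun ω => by
      rw [mem_ofPred_eq, hx1]
      exact (huI ω).2
    rw [this, hx1]
    simp
  rw [← ENNReal.ofReal_toReal (measure_ne_top P {ω | u ω ≤ x.1})]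
  congr 1
  change P.real {ω | u ω ≤ x.1} = x.1
  have hx0 : 0 ≤ x.1 := x.2.1
  -- `{f n < k} ⊆ {u ≤ x} ⊆ {f n < k + 1}` for `k = ⌊x * 2 ^ n⌋`
  have hest : ∀ n : ℕ, x.1 - (1 / 2) ^ n ≤ P.real {ω | u ω ≤ x.1} ∧
      P.real {ω | u ω ≤ x.1} ≤ x.1 + (1 / 2) ^ n := by
    intro n
    have hpow : (0 : ℝ) < 2 ^ n := by positivity
    set k := ⌊x.1 * 2 ^ n⌋₊ with hk
    have hk1 : (k : ℝ) ≤ x.1 * 2 ^ n := Nat.floor_le (by positivity)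
    have hk2 : x.1 * 2 ^ n < k + 1 := Nat.lt_floor_add_one _
    have hklt : k < 2 ^ n := by
      have : (k : ℝ) < 2 ^ n := by nlinarith
      exact_mod_cast this
    have hp : ((1 / 2 : ℝ)) ^ n = 1 / 2 ^ n := by simp
    constructor
    · have hsub : {ω | (f n).1 ω < k} ⊆ {ω | u ω ≤ x.1} := fun ω h => by
        have h' : ((f n).1 ω : ℝ) + 1 ≤ k := by exact_mod_cast h
        refine (hub ω n).trans ?_
        simp only [b]
        rw [div_le_iff₀ hpow]
        linarith
      have h1 := measureReal_mono (μ := P) hsub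
      rw [(f n).2.2 k hklt.le] at h1
      refine le_trans ?_ h1
      rw [hp, le_div_iff₀ hpow, sub_mul, one_div_mul_cancel hpow.ne']
      linarith
    · have hsub : {ω | u ω ≤ x.1} ⊆ {ω | (f n).1 ω < k + 1} := fun ω h => by
        have h' : a ω n ≤ x.1 := (hau ω n).trans h
        simp only [a] at h'
        rw [div_le_iff₀ hpow] at h'
        have : ((f n).1 ω : ℝ) < k + 1 := by linarith
        exact_mod_cast this
      have h1 := measureReal_mono (μ := P) hsub
      rw [(f n).2.2 (k + 1) hklt] at h1
      refine h1.trans ?_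
      rw [hp, div_le_iff₀ hpow, add_mul, one_div_mul_cancel hpow.ne']
      push_cast
      linarith
  have hz : Filter.Tendsto (fun n : ℕ => (1 / 2 : ℝ) ^ n) Filter.atTop (nhds 0) :=
    tendsto_pow_atTop_nhds_zero_of_lt_one (by norm_num) (by norm_num)
  refine le_antisymm ?_ ?_
  · have := ge_of_tendsto' (hz.const_add x.1) fun n => (hest n).2
    simpa using this
  · have := le_of_tendsto' (hz.const_sub x.1) fun n => (hest n).1
    simpa using this

lemma IsAtomless.exists_map_eq [IsProbabilityMeasure P] (hP : IsAtomless P)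
    {E : Type*} [Nonempty E] [MeasurableSpace E] [StandardBorelSpace E]
    (ν : Measure E) [IsProbabilityMeasure ν] :
    ∃ g : Ω → E, Measurable g ∧ P.map g = ν := by
  obtain ⟨U, hU, hUP⟩ := hP.exists_uniform
  obtain ⟨f, hf, hfν⟩ := ν.exists_measurable_map_eq
  exact ⟨f ∘ U, hf.comp hU, by rw [← Measure.map_map hf hU, hUP, hfν]⟩

/-- Every measure on `ℝ` of total mass `P A` is the law of a random variable on `A`. -/
lemma IsAtomless.exists_map_restrict_eq [IsProbabilityMeasure P] (hP : IsAtomless P)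
    {A : Set Ω} (hA : MeasurableSet A) (ν : Measure ℝ) (hν : ν univ = P A) :
    ∃ g : Ω → ℝ, Measurable g ∧ (P.restrict A).map g = ν := by
  by_cases h0 : P A = 0
  · refine ⟨fun _ => 0, measurable_const, ?_⟩
    rw [Measure.restrict_eq_zero.2 h0, Measure.map_zero]
    exact (Measure.measure_univ_eq_zero.1 (hν.trans h0)).symm
  have ht : P A ≠ ⊤ := by finiteness
  have hi0 : (P A)⁻¹ ≠ 0 := ENNReal.inv_ne_zero.2 ht
  have hit : (P A)⁻¹ ≠ ⊤ := ENNReal.inv_ne_top.2 h0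
  have hc : P A * (P A)⁻¹ = 1 := ENNReal.mul_inv_cancel h0 ht
  have : IsProbabilityMeasure ((P A)⁻¹ • P.restrict A) := ⟨by simp [mul_comm _ (P A), hc]⟩
  have : IsProbabilityMeasure ((P A)⁻¹ • ν) := ⟨by simp [hν, mul_comm _ (P A), hc]⟩
  have hQ : IsAtomless ((P A)⁻¹ • P.restrict A) := by
    intro D hD hpos
    have hval : ∀ G, MeasurableSet G → ((P A)⁻¹ • P.restrict A) G = (P A)⁻¹ * P (G ∩ A) :=
      fun G hG => by simp [Measure.restrict_apply hG]
    rw [hval D hD] at hpos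
    obtain ⟨B, hB, hBD, hB0, hBlt⟩ := hP (D ∩ A) (hD.inter hA)
      (pos_iff_ne_zero.2 fun h => by simp [h] at hpos)
    have hBA : B ∩ A = B := inter_eq_left.2 (hBD.trans inter_subset_right)
    refine ⟨B, hB, hBD.trans inter_subset_left, ?_, ?_⟩
    · rw [hval B hB, hBA]
      exact ENNReal.mul_pos hi0 hB0.ne'
    · rw [hval B hB, hval D hD, hBA]
      exact (ENNReal.mul_lt_mul_iff_right hi0 hit).2 hBlt
  obtain ⟨g, hg, hgν⟩ := hQ.exists_map_eq ((P A)⁻¹ • ν)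
  refine ⟨g, hg, ?_⟩
  rw [Measure.map_smul] at hgν
  have := congrArg (fun μ => P A • μ) hgν
  simpa [smul_smul, hc] using this

end Atomless

/-! ### Separation in the weak topology -/

section Separation

variable {P : Measure Ω}

/-- Hahn–Banach separation of a point from a weakly closed convex set by an element of the dual
space. A basic weak neighbourhood of `X` missing `C` involves finitely many `Y i` only, so the
separation takes place between the images in a finite-dimensional space, and the separating
functional there is a linear combination of the coordinates. -/
lemma WeakClosed.exists_separating (pr : PairedSpaces P) {C : Set (Ω → ℝ)}
    (hC : WeakClosed P pr C) (hCsub : C ⊆ pr.carrier) (hconv : ConvexSet C)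
    {X : Ω → ℝ} (hX : X ∈ pr.carrier) (hXC : X ∉ C) :
    ∃ Y ∈ pr.dual, ∃ u : ℝ, (∀ X' ∈ C, ∫ ω, X' ω * Y ω ∂P < u) ∧
      u < ∫ ω, X ω * Y ω ∂P := by
  obtain ⟨V, hV, hVeq⟩ := isOpen_induced_iff.1 (@IsClosed.isOpen_compl _ _ _ hC)
  have hXV : (fun Y : ↥pr.dual => ∫ ω, X ω * (Y : Ω → ℝ) ω ∂P) ∈ V := by
    have : (⟨X, hX⟩ : ↥pr.carrier) ∈ {X : ↥pr.carrier | (X : Ω → ℝ) ∈ C}ᶜ := hXC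
    rw [← hVeq] at this
    exact this
  -- `I` is the finite set of dual elements defining a neighbourhood of `X` disjoint from `C`
  obtain ⟨I, w, hw, hIV⟩ := isOpen_pi_iff.1 hV _ hXV
  let Λ : (Ω → ℝ) → (I → ℝ) := fun W i => ∫ ω, W ω * (i.1 : Ω → ℝ) ω ∂P
  have hint : ∀ W ∈ pr.carrier, ∀ Y : ↥pr.dual, Integrable (fun ω => W ω * (Y : Ω → ℝ) ω) P :=
    fun W hW Y => pr.mul_int W hW Y Y.2
  let O : Set (I → ℝ) := Set.pi univ fun i => w i.1
  have hO : IsOpen O := isOpen_set_pi finite_univ fun i _ => (hw i.1 i.2).1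
  have hXO : Λ X ∈ O := fun i _ => (hw i.1 i.2).2
  have hdisj : Disjoint (Λ '' C) O := by
    rw [Set.disjoint_left]
    rintro _ ⟨W, hW, rfl⟩ hWO
    have hmem : (fun Y : ↥pr.dual => ∫ ω, W ω * (Y : Ω → ℝ) ω ∂P) ∈ V :=
      hIV fun Y hY => hWO ⟨Y, hY⟩ trivial
    have : (⟨W, hCsub hW⟩ : ↥pr.carrier) ∈ {X : ↥pr.carrier | (X : Ω → ℝ) ∈ C}ᶜ := by
      rw [← hVeq]
      exact hmem
    exact this hW
  have hconv' : Convex ℝ (Λ '' C) := by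
    rintro _ ⟨W, hW, rfl⟩ _ ⟨W', hW', rfl⟩ s t hs ht hst
    refine ⟨_, hconv W hW W' hW' s ⟨hs, by linarith⟩, ?_⟩
    have ht' : t = 1 - s := by linarith
    subst ht'
    ext i
    simp only [Λ, Pi.add_apply, Pi.smul_apply, smul_eq_mul, add_mul, mul_assoc]
    rw [integral_add ((hint W (hCsub hW) i.1).const_mul _)
      ((hint W' (hCsub hW') i.1).const_mul _), integral_const_mul, integral_const_mul]
  have hXcl : Λ X ∉ closure (Λ '' C) := fun h =>
    (hdisj.symm.closure_right hO).le_bot ⟨hXO, h⟩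
  obtain ⟨f, u, hfu, huX⟩ :=
    geometric_hahn_banach_closed_point hconv'.closure isClosed_closure hXcl
  classical
  let c : I → ℝ := fun i => f (Pi.single i 1)
  have hf : ∀ v : I → ℝ, f v = ∑ i, v i * c i := by
    intro v
    conv_lhs => rw [pi_eq_sum_univ' v]
    simp [c]
  have hYmem : ∀ s : Finset I, (fun ω => ∑ i ∈ s, c i * (i.1 : Ω → ℝ) ω) ∈ pr.dual := by
    intro s
    induction s using Finset.induction_on with
    | empty => exact pr.linf_dual _ ⟨by simp, 0, by simp⟩
    | insert i s his ih =>
      simp only [Finset.sum_insert his]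
      exact pr.add_dual _ (pr.smul_dual _ i.1.2 _) _ ih
  have heq : ∀ W ∈ pr.carrier,
      ∫ ω, W ω * (∑ i, c i * (i.1 : Ω → ℝ) ω) ∂P = f (Λ W) := by
    intro W hW
    rw [hf]
    simp only [Finset.mul_sum]
    rw [integral_finsetSum]
    · refine Finset.sum_congr rfl fun i _ => ?_
      simp only [Λ, mul_left_comm _ (c i)]
      rw [integral_const_mul, mul_comm]
    · intro i _
      simp only [mul_left_comm _ (c i)]
      exact (hint W hW i.1).const_mul _
  refine ⟨_, hYmem Finset.univ, u, fun W hW => ?_, ?_⟩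
  · rw [heq W (hCsub hW)]
    exact hfu _ (subset_closure ⟨W, hW, rfl⟩)
  · rw [heq X hX]
    exact huX

end Separation

/-! ### Equidistributed copies and their pairings -/

section Rearrangement

variable {P : Measure Ω}

lemma SameLaw.identDistrib {X Y : Ω → ℝ} (hX : Measurable X) (hY : Measurable Y)
    (h : SameLaw P X Y) : ProbabilityTheory.IdentDistrib X Y P P :=
  ⟨hX.aemeasurable, hY.aemeasurable, h⟩

/-- Every law on `ℝ` is the image of Haar measure on the circle. -/
lemma exists_circle_map_eq (ν : Measure ℝ) [IsProbabilityMeasure ν] :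
    ∃ g : UnitAddCircle → ℝ, Measurable g ∧ (volume : Measure UnitAddCircle).map g = ν := by
  obtain ⟨f, hf, hfν⟩ := ν.exists_measurable_map_eq
  let p : ℝ → unitInterval := projIcc 0 1 zero_le_one
  have hp : Measurable p := continuous_projIcc.measurable
  have h1 : MeasurePreserving
      (fun x : UnitAddCircle => ((AddCircle.equivIoc 1 0 x : Ioc (0:ℝ) (0+1)) : ℝ))
      volume (volume.restrict (Ioc 0 (0 + 1))) :=
    (measurePreserving_subtype_coe measurableSet_Ioc).comp (AddCircle.measurePreserving_equivIoc 1)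
  have h2 : MeasurePreserving (Subtype.val : unitInterval → ℝ) volume
      (volume.restrict (Icc 0 1)) := measurePreserving_subtype_coe measurableSet_Icc
  refine ⟨fun x => f (p (AddCircle.equivIoc 1 0 x : Ioc (0:ℝ) (0+1))),
    (hf.comp hp).comp h1.measurable, ?_⟩
  change Measure.map ((f ∘ p) ∘ _) _ = ν
  rw [← Measure.map_map (hf.comp hp) h1.measurable, h1.map_eq, zero_add,
    restrict_Ioc_eq_restrict_Icc, ← h2.map_eq, Measure.map_map (hf.comp hp) h2.measurable]
  rw [← hfν]
  congr 1
  ext x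
  simp [p]

/-- Some copy `X'` of `X` satisfies `E[X' Y] ≥ E[X] E[Y]`. With `U` uniform on the circle and `g`
carrying Haar measure to the law of `X`, every rotation `g (U + θ)` is a copy of `X`, and by Fubini
the average over `θ` of `E[g (U + θ) Y]` is exactly `E[X] E[Y]`. -/
lemma IsAtomless.exists_sameLaw_integral_mul_ge [IsProbabilityMeasure P] (hP : IsAtomless P)
    {X Y : Ω → ℝ} (hX : Measurable X) (hXi : Integrable X P) (hYi : Integrable Y P) :
    ∃ X' : Ω → ℝ, Measurable X' ∧ SameLaw P X' X ∧
      (∫ ω, X ω ∂P) * (∫ ω, Y ω ∂P) ≤ ∫ ω, X' ω * Y ω ∂P := by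
  have : IsProbabilityMeasure (volume : Measure UnitAddCircle) := ⟨UnitAddCircle.measure_univ⟩
  have := Measure.isProbabilityMeasure_map (μ := P) hX.aemeasurable
  obtain ⟨U, hU, hUP⟩ := hP.exists_map_eq (volume : Measure UnitAddCircle)
  obtain ⟨g, hg, hgX⟩ := exists_circle_map_eq (P.map X)
  have hgi : Integrable g volume := by
    have h : Integrable id ((volume : Measure UnitAddCircle).map g) := by
      rw [hgX]
      exact (integrable_map_measure (by fun_prop) hX.aemeasurable).2 hXi
    exact (integrable_map_measure (by fun_prop) hg.aemeasurable).1 h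
  have hgint : ∫ s, g s = ∫ ω, X ω ∂P := by
    have h1 := integral_map (μ := (volume : Measure UnitAddCircle)) hg.aemeasurable
      (f := id) (by fun_prop)
    have h2 := integral_map (μ := P) hX.aemeasurable (f := id) (by fun_prop)
    rw [hgX] at h1
    exact h1.symm.trans h2
  have hT : MeasurePreserving (fun p : Ω × UnitAddCircle => (p.1, U p.1 + p.2))
      (P.prod volume) (P.prod volume) :=
    (MeasurePreserving.id P).skew_product (g := fun ω θ => U ω + θ)
      ((hU.comp measurable_fst).add measurable_snd)
      (Filter.Eventually.of_forall fun ω => map_add_left_eq_self _ _)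
  have hF0 : Integrable (fun p : Ω × UnitAddCircle => Y p.1 * g p.2) (P.prod volume) :=
    hYi.mul_prod hgi
  have hF : Integrable (fun p : Ω × UnitAddCircle => Y p.1 * g (U p.1 + p.2))
      (P.prod volume) := hT.integrable_comp_of_integrable hF0
  have hval : ∫ p : Ω × UnitAddCircle, Y p.1 * g (U p.1 + p.2) ∂(P.prod volume) =
      (∫ ω, X ω ∂P) * (∫ ω, Y ω ∂P) := by
    have h := integral_map (μ := P.prod (volume : Measure UnitAddCircle)) hT.aemeasurable
      (f := fun p => Y p.1 * g p.2) (by rw [hT.map_eq]; exact hF0.aestronglyMeasurable)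
    rw [hT.map_eq, integral_prod_mul, hgint, mul_comm] at h
    exact h.symm
  rw [integral_prod_symm _ hF] at hval
  obtain ⟨θ, hθ⟩ := exists_integral_le hF.integral_prod_right
  refine ⟨fun ω => g (U ω + θ), hg.comp (hU.add_const θ), ?_, ?_⟩
  · have h : (fun ω => g (U ω + θ)) = g ∘ (fun s => s + θ) ∘ U := rfl
    rw [SameLaw, h, ← Measure.map_map hg ((measurable_add_const θ).comp hU),
      ← Measure.map_map (measurable_add_const θ) hU, hUP, map_add_right_eq_self, hgX]
  · rw [hval] at hθ
    simpa only [mul_comm] using hθ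

/-- A nonconstant integrable variable lies on either side of its mean with positive probability. -/
lemma Nonconstant.integral_split [IsProbabilityMeasure P] {Z : Ω → ℝ}
    (hZi : Integrable Z P) (hZ : Nonconstant P Z) :
    0 < P.real {ω | ∫ ω', Z ω' ∂P < Z ω} ∧ 0 < P.real {ω | Z ω ≤ ∫ ω', Z ω' ∂P} := by
  set c := ∫ ω', Z ω' ∂P with hc
  constructor
  · refine ENNReal.toReal_pos (fun h0 => ?_) (by finiteness)
    have hle : Z ≤ᵐ[P] fun _ => c := by
      filter_upwards [measure_eq_zero_iff_ae_notMem.1 h0] with ω h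
      exact not_lt.1 h
    exact hZ c ((integral_eq_iff_of_ae_le hZi (integrable_const c) hle).1 (by simp [hc]))
  · refine ENNReal.toReal_pos (fun h0 => ?_) (by finiteness)
    have hle : (fun _ => c) ≤ᵐ[P] Z := by
      filter_upwards [measure_eq_zero_iff_ae_notMem.1 h0] with ω h
      exact (not_le.1 h).le
    exact hZ c ((integral_eq_iff_of_ae_le (integrable_const c) hZi hle).1 (by simp [hc])).symm

open Classical in
/-- The function equal to `f` on `A`, to `g` on `B \ A`, and to `h` elsewhere. -/
def glue (A B : Set Ω) (f g h : Ω → ℝ) : Ω → ℝ :=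
  fun ω => if ω ∈ A then f ω else if ω ∈ B then g ω else h ω

lemma measurable_glue {A B : Set Ω} {f g h : Ω → ℝ} (hA : MeasurableSet A)
    (hB : MeasurableSet B) (hf : Measurable f) (hg : Measurable g) (hh : Measurable h) :
    Measurable (glue A B f g h) :=
  Measurable.ite hA hf (Measurable.ite hB hg hh)

lemma eq_restrict_add_restrict_add {A B : Set Ω} (hA : MeasurableSet A) (hB : MeasurableSet B)
    (hAB : Disjoint A B) :
    P = P.restrict A + P.restrict B + P.restrict (A ∪ B)ᶜ := by
  rw [← Measure.restrict_union hAB hB, Measure.restrict_add_restrict_compl (hA.union hB)]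

lemma map_glue {A B : Set Ω} {f g h : Ω → ℝ} (hA : MeasurableSet A)
    (hB : MeasurableSet B) (hAB : Disjoint A B)
    (hf : Measurable f) (hg : Measurable g) (hh : Measurable h) :
    P.map (glue A B f g h) =
      (P.restrict A).map f + (P.restrict B).map g + (P.restrict (A ∪ B)ᶜ).map h := by
  have hm := measurable_glue hA hB hf hg hh
  conv_lhs => rw [eq_restrict_add_restrict_add (P := P) hA hB hAB]
  rw [Measure.map_add _ _ hm, Measure.map_add _ _ hm]
  congr 1
  · congr 1
    · refine Measure.map_congr ?_
      filter_upwards [ae_restrict_mem hA] with ω hω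
      simp [glue, hω]
    · refine Measure.map_congr ?_
      filter_upwards [ae_restrict_mem hB] with ω hω
      simp [glue, hω, disjoint_right.1 hAB hω]
  · refine Measure.map_congr ?_
    filter_upwards [ae_restrict_mem (hA.union hB).compl] with ω hω
    simp only [mem_compl_iff, mem_union, not_or] at hω
    simp [glue, hω]

/-- If `Z` and `Y` are both nonconstant, then `E[Z' Y]` is not the same for all copies `Z'` of `Z`.
Take sets `A`, `B` of equal probability on which `Y` is above, respectively at most, its mean, and
let two copies of `Z` agree off `A ∪ B` while one takes large values on `A` and small ones on `B`
and the other does the opposite. -/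
lemma IsAtomless.exists_sameLaw_integral_mul_lt [IsProbabilityMeasure P] (hP : IsAtomless P)
    {Z Y : Ω → ℝ} (hZm : Measurable Z) (hYm : Measurable Y)
    (hZi : Integrable Z P) (hYi : Integrable Y P)
    (hZ : Nonconstant P Z) (hY : Nonconstant P Y)
    (hmul : ∀ Z' : Ω → ℝ, Measurable Z' → SameLaw P Z' Z → Integrable (fun ω => Z' ω * Y ω) P) :
    ∃ Z₁ Z₂ : Ω → ℝ, Measurable Z₁ ∧ Measurable Z₂ ∧ SameLaw P Z₁ Z ∧ SameLaw P Z₂ Z ∧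
      ∫ ω, Z₂ ω * Y ω ∂P < ∫ ω, Z₁ ω * Y ω ∂P := by
  obtain ⟨hZ1, hZ2⟩ := hZ.integral_split hZi
  obtain ⟨hY1, hY2⟩ := hY.integral_split hYi
  set c := ∫ ω, Z ω ∂P
  set y := ∫ ω, Y ω ∂P
  obtain ⟨p, hp0, hp1, hp2, hp3, hp4⟩ : ∃ p : ℝ, 0 < p ∧ p ≤ P.real {ω | c < Z ω} ∧
      p ≤ P.real {ω | Z ω ≤ c} ∧ p ≤ P.real {ω | y < Y ω} ∧ p ≤ P.real {ω | Y ω ≤ y} :=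
    ⟨min (min (P.real {ω | c < Z ω}) (P.real {ω | Z ω ≤ c}))
      (min (P.real {ω | y < Y ω}) (P.real {ω | Y ω ≤ y})),
      by positivity, by simp, by simp, by simp, by simp⟩
  obtain ⟨A₀, hA₀, hA₀s, hA₀p⟩ := hP.exists_subset_eq (hZm measurableSet_Ioi) hp0.le hp1
  obtain ⟨B₀, hB₀, hB₀s, hB₀p⟩ := hP.exists_subset_eq (hZm measurableSet_Iic) hp0.le hp2
  obtain ⟨A, hA, hAs, hAp⟩ := hP.exists_subset_eq (hYm measurableSet_Ioi) hp0.le hp3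
  obtain ⟨B, hB, hBs, hBp⟩ := hP.exists_subset_eq (hYm measurableSet_Iic) hp0.le hp4
  have hd₀ : Disjoint A₀ B₀ := disjoint_left.2 fun ω h h' =>
    absurd (show c < Z ω from hA₀s h) (not_lt.2 (show Z ω ≤ c from hB₀s h'))
  have hd : Disjoint A B := disjoint_left.2 fun ω h h' =>
    absurd (show y < Y ω from hAs h) (not_lt.2 (show Y ω ≤ y from hBs h'))
  have conv : ∀ {S T : Set Ω}, P.real S = P.real T → P S = P T := fun h =>
    (ENNReal.toReal_eq_toReal_iff' (by finiteness) (by finiteness)).1 h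
  have hcompl : P (A₀ ∪ B₀)ᶜ = P (A ∪ B)ᶜ := by
    apply conv
    rw [measureReal_compl (hA.union hB), measureReal_compl (hA₀.union hB₀),
      measureReal_union hd hB, measureReal_union hd₀ hB₀, hA₀p, hB₀p, hAp, hBp]
  -- the law of `Z` splits into a part above `c`, a part at most `c`, and the remainder; the two
  -- copies place the first two parts on `A` and `B` in opposite ways
  let ν₁ := (P.restrict A₀).map Z
  let ν₂ := (P.restrict B₀).map Z
  let ν₃ := (P.restrict (A₀ ∪ B₀)ᶜ).map Z
  have hν₁ : ν₁ univ = P A₀ := by simp [ν₁, Measure.map_apply hZm MeasurableSet.univ]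
  have hν₂ : ν₂ univ = P B₀ := by simp [ν₂, Measure.map_apply hZm MeasurableSet.univ]
  have hν₃ : ν₃ univ = P (A₀ ∪ B₀)ᶜ := by simp [ν₃, Measure.map_apply hZm MeasurableSet.univ]
  have hlaw : P.map Z = ν₁ + ν₂ + ν₃ := by
    conv_lhs => rw [eq_restrict_add_restrict_add (P := P) hA₀ hB₀ hd₀]
    rw [Measure.map_add _ _ hZm, Measure.map_add _ _ hZm]
  have hν₁c : ∀ᵐ x ∂ν₁, c < x := by
    refine (ae_map_iff hZm.aemeasurable measurableSet_Ioi).2 ?_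
    filter_upwards [ae_restrict_mem hA₀] with ω hω using hA₀s hω
  have hν₂c : ∀ᵐ x ∂ν₂, x ≤ c := by
    refine (ae_map_iff hZm.aemeasurable measurableSet_Iic).2 ?_
    filter_upwards [ae_restrict_mem hB₀] with ω hω using hB₀s hω
  obtain ⟨g₁, hg₁, hg₁ν⟩ := hP.exists_map_restrict_eq hA ν₁ (hν₁.trans (conv (hA₀p.trans hAp.symm)))
  obtain ⟨g₂, hg₂, hg₂ν⟩ := hP.exists_map_restrict_eq hB ν₂ (hν₂.trans (conv (hB₀p.trans hBp.symm)))
  obtain ⟨h₁, hh₁, hh₁ν⟩ := hP.exists_map_restrict_eq hB ν₁ (hν₁.trans (conv (hA₀p.trans hBp.symm)))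
  obtain ⟨h₂, hh₂, hh₂ν⟩ := hP.exists_map_restrict_eq hA ν₂ (hν₂.trans (conv (hB₀p.trans hAp.symm)))
  obtain ⟨k, hk, hkν⟩ := hP.exists_map_restrict_eq (hA.union hB).compl ν₃ (hν₃.trans hcompl)
  have hm₁ := measurable_glue hA hB hg₁ hg₂ hk
  have hm₂ := measurable_glue hA hB hh₂ hh₁ hk
  have hl₁ : SameLaw P (glue A B g₁ g₂ k) Z := by
    rw [SameLaw, map_glue hA hB hd hg₁ hg₂ hk, hlaw, hg₁ν, hg₂ν, hkν]
  have hl₂ : SameLaw P (glue A B h₂ h₁ k) Z := by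
    rw [SameLaw, map_glue hA hB hd hh₂ hh₁ hk, hlaw, hh₁ν, hh₂ν, hkν, add_comm ν₂]
  refine ⟨_, _, hm₁, hm₂, hl₁, hl₂, ?_⟩
  have hid₁ := hl₁.identDistrib hm₁ hZm
  have hid₂ := hl₂.identDistrib hm₂ hZm
  have hi₁ := hid₁.integrable_iff.2 hZi
  have hi₂ := hid₂.integrable_iff.2 hZi
  have hE : ∫ ω, glue A B g₁ g₂ k ω ∂P = ∫ ω, glue A B h₂ h₁ k ω ∂P :=
    hid₁.integral_eq.trans hid₂.integral_eq.symm
  have hY₁ := hmul _ hm₁ hl₁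
  have hY₂ := hmul _ hm₂ hl₂
  set Z₁ := glue A B g₁ g₂ k
  set Z₂ := glue A B h₂ h₁ k
  have e1 : ∀ᵐ ω ∂P, ω ∈ A → c < g₁ ω := by
    rw [← ae_restrict_iff' hA]
    exact ae_of_ae_map hg₁.aemeasurable (hg₁ν ▸ hν₁c)
  have e2 : ∀ᵐ ω ∂P, ω ∈ A → h₂ ω ≤ c := by
    rw [← ae_restrict_iff' hA]
    exact ae_of_ae_map hh₂.aemeasurable (hh₂ν ▸ hν₂c)
  have e3 : ∀ᵐ ω ∂P, ω ∈ B → g₂ ω ≤ c := by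
    rw [← ae_restrict_iff' hB]
    exact ae_of_ae_map hg₂.aemeasurable (hg₂ν ▸ hν₂c)
  have e4 : ∀ᵐ ω ∂P, ω ∈ B → c < h₁ ω := by
    rw [← ae_restrict_iff' hB]
    exact ae_of_ae_map hh₁.aemeasurable (hh₁ν ▸ hν₁c)
  have hexp : (fun ω => (Z₁ ω - Z₂ ω) * (Y ω - y)) = fun ω =>
      (Z₁ ω * Y ω - Z₂ ω * Y ω) - (Z₁ ω - Z₂ ω) * y := by
    ext ω
    ring
  have hd₁ : Integrable (fun ω => Z₁ ω * Y ω - Z₂ ω * Y ω) P := hY₁.sub hY₂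
  have hd₂ : Integrable (fun ω => (Z₁ ω - Z₂ ω) * y) P := (hi₁.sub hi₂).mul_const y
  have hWi : Integrable (fun ω => (Z₁ ω - Z₂ ω) * (Y ω - y)) P := by
    rw [hexp]
    exact hd₁.sub hd₂
  -- equal laws have equal means, so centring `Y` at `y` does not change the difference
  have hWval : ∫ ω, (Z₁ ω - Z₂ ω) * (Y ω - y) ∂P =
      ∫ ω, Z₁ ω * Y ω ∂P - ∫ ω, Z₂ ω * Y ω ∂P := by
    rw [hexp, integral_sub hd₁ hd₂, integral_sub hY₁ hY₂,
      integral_mul_const, integral_sub hi₁ hi₂, hE]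
    ring
  have hWA : ∀ᵐ ω ∂P, ω ∈ A → 0 < (Z₁ ω - Z₂ ω) * (Y ω - y) := by
    filter_upwards [e1, e2] with ω h1 h2 hω
    have : y < Y ω := hAs hω
    simp only [Z₁, Z₂, glue, if_pos hω]
    exact mul_pos (by linarith [h1 hω, h2 hω]) (by linarith)
  have hW0 : 0 ≤ᵐ[P] fun ω => (Z₁ ω - Z₂ ω) * (Y ω - y) := by
    filter_upwards [hWA, e3, e4] with ω h1 h2 h3
    by_cases hωA : ω ∈ A
    · exact (h1 hωA).le
    by_cases hωB : ω ∈ B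
    · have : Y ω ≤ y := hBs hωB
      simp only [Z₁, Z₂, glue, if_neg hωA, if_pos hωB, Pi.zero_apply]
      exact mul_nonneg_of_nonpos_of_nonpos (by linarith [h2 hωB, h3 hωB]) (by linarith)
    · simp [Z₁, Z₂, glue, hωA, hωB]
  have hpos : 0 < ∫ ω, (Z₁ ω - Z₂ ω) * (Y ω - y) ∂P := by
    rw [integral_pos_iff_support_of_nonneg_ae hW0 hWi]
    have hAP : 0 < P A := (ENNReal.toReal_pos_iff.1 (show 0 < P.real A by rw [hAp]; exact hp0)).1
    refine hAP.trans_le (measure_mono_ae ?_)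
    filter_upwards [hWA] with ω h hω
    exact (h hω).ne'
  linarith

end Rearrangement

/-! ### Law-invariant quasiconvex functionals -/

section Functional

variable {P : Measure Ω}

lemma PairedSpaces.const_mem (pr : PairedSpaces P) (x : ℝ) : (fun _ => x) ∈ pr.carrier :=
  pr.linf_carrier _ ⟨measurable_const, |x|, by simp⟩

lemma QuasiconvexFn.convexSet_sublevel {pr : PairedSpaces P} {φ : (Ω → ℝ) → EReal}
    (hqc : QuasiconvexFn pr.carrier φ) (m : ℝ) :
    ConvexSet {X | X ∈ pr.carrier ∧ φ X ≤ (m : EReal)} := by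
  rintro X ⟨hX, hXm⟩ X' ⟨hX', hXm'⟩ l hl
  exact ⟨pr.add_carrier _ (pr.smul_carrier _ hX _) _ (pr.smul_carrier _ hX' _),
    (hqc X hX X' hX' l hl).trans (max_le hXm hXm')⟩

/-- Replacing a variable by its mean does not increase `φ`. -/
lemma apply_integral_le [IsProbabilityMeasure P] (hP : IsAtomless P)
    {pr : PairedSpaces P} {φ : (Ω → ℝ) → EReal} (hbot : ∀ X ∈ pr.carrier, φ X ≠ (⊥ : EReal))
    (hqc : QuasiconvexFn pr.carrier φ) (hlsc : WeakLSC P pr φ)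
    (hlaw : LawInvariantFn P pr.carrier φ) {X : Ω → ℝ} (hX : X ∈ pr.carrier) :
    φ (fun _ => ∫ ω, X ω ∂P) ≤ φ X := by
  by_cases htop : φ X = ⊤
  · rw [htop]
    exact le_top
  have hm : ((φ X).toReal : EReal) = φ X := EReal.coe_toReal htop (hbot X hX)
  by_contra hlt
  obtain ⟨Y, hY, u, hu, huX⟩ := (hlsc (φ X).toReal).exists_separating pr (fun _ h => h.1)
    (hqc.convexSet_sublevel _) (pr.const_mem (∫ ω, X ω ∂P))
    (fun h => hlt (h.2.trans hm.le))
  obtain ⟨X', hX'm, hX'l, hge⟩ := hP.exists_sameLaw_integral_mul_ge (pr.meas_carrier X hX)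
    (pr.int_carrier X hX) (pr.int_dual Y hY)
  have hX' := pr.lawinv_carrier X hX X' hX'm hX'l
  have := hu X' ⟨hX', by rw [hm, hlaw X' hX' X hX hX'l]⟩
  rw [integral_const_mul] at huX
  linarith

/-- If `φ ≤ m` on the line of all `x + t Z` with the same mean as `X`, where `Z` is nonconstant,
then `φ X ≤ m`. A functional `Y` separating `X` from the sublevel set would be bounded above on
this line for every copy of `Z`, so `E[Z' Y]` would be the same for all copies `Z'`. Then `Y` is
constant and cannot separate `X` from other variables with the same mean. -/
lemma apply_le_of_line [IsProbabilityMeasure P] (hP : IsAtomless P)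
    {pr : PairedSpaces P} {φ : (Ω → ℝ) → EReal}
    (hqc : QuasiconvexFn pr.carrier φ) (hlsc : WeakLSC P pr φ)
    (hlaw : LawInvariantFn P pr.carrier φ) {Z X : Ω → ℝ} (hZ : Z ∈ pr.carrier)
    (hZn : Nonconstant P Z) (hX : X ∈ pr.carrier) (m : ℝ)
    (hline : ∀ t : ℝ, φ (fun ω => (∫ ω', X ω' ∂P - t * ∫ ω', Z ω' ∂P) + t * Z ω) ≤ (m : EReal)) :
    φ X ≤ (m : EReal) := by
  by_contra hlt
  obtain ⟨Y, hY, u, hu, huX⟩ := (hlsc m).exists_separating pr (fun _ h => h.1)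
    (hqc.convexSet_sublevel _) hX (fun h => hlt h.2)
  have hYi := pr.int_dual Y hY
  have hZm := pr.meas_carrier Z hZ
  have hmem : ∀ x t : ℝ, ∀ W ∈ pr.carrier, (fun ω => x + t * W ω) ∈ pr.carrier :=
    fun x t W hW => pr.add_carrier _ (pr.const_mem x) _ (pr.smul_carrier W hW t)
  have hbound : ∀ Z' : Ω → ℝ, Measurable Z' → SameLaw P Z' Z → ∀ t : ℝ,
      (∫ ω, X ω ∂P) * (∫ ω, Y ω ∂P) +
        t * (∫ ω, Z' ω * Y ω ∂P - (∫ ω, Z ω ∂P) * (∫ ω, Y ω ∂P)) < u := by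
    intro Z' hZ'm hZ'l t
    have hZ' := pr.lawinv_carrier Z hZ Z' hZ'm hZ'l
    set x := ∫ ω', X ω' ∂P - t * ∫ ω', Z ω' ∂P with hx
    have hl : SameLaw P (fun ω => x + t * Z' ω) (fun ω => x + t * Z ω) := by
      have hT : Measurable fun z : ℝ => x + t * z := by fun_prop
      have h1 := Measure.map_map (μ := P) hT hZ'm
      have h2 := Measure.map_map (μ := P) hT hZm
      rw [show P.map Z' = P.map Z from hZ'l] at h1
      exact h1.symm.trans h2
    have h := hu _ ⟨hmem x t Z' hZ', by
      rw [hlaw _ (hmem x t Z' hZ') _ (hmem x t Z hZ) hl]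
      exact hline t⟩
    simp only [add_mul, mul_assoc] at h
    rw [integral_add (hYi.const_mul _) ((pr.mul_int Z' hZ' Y hY).const_mul _),
      integral_const_mul, integral_const_mul] at h
    rw [hx] at h
    linarith
  have hconst : ∀ Z' : Ω → ℝ, Measurable Z' → SameLaw P Z' Z →
      ∫ ω, Z' ω * Y ω ∂P = (∫ ω, Z ω ∂P) * (∫ ω, Y ω ∂P) := by
    intro Z' hZ'm hZ'l
    by_contra hne
    have hd : ∫ ω, Z' ω * Y ω ∂P - (∫ ω, Z ω ∂P) * (∫ ω, Y ω ∂P) ≠ 0 := sub_ne_zero.2 hne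
    have h := hbound Z' hZ'm hZ'l ((u - (∫ ω, X ω ∂P) * (∫ ω, Y ω ∂P)) /
      (∫ ω, Z' ω * Y ω ∂P - (∫ ω, Z ω ∂P) * (∫ ω, Y ω ∂P)))
    rw [div_mul_cancel₀ _ hd] at h
    linarith
  by_cases hYn : Nonconstant P Y
  · obtain ⟨Z₁, Z₂, hm₁, hm₂, hl₁, hl₂, h⟩ := hP.exists_sameLaw_integral_mul_lt hZm
      (pr.meas_dual Y hY) (pr.int_carrier Z hZ) hYi hZn hYn
      (fun Z' h1 h2 => pr.mul_int Z' (pr.lawinv_carrier Z hZ Z' h1 h2) Y hY)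
    rw [hconst Z₁ hm₁ hl₁, hconst Z₂ hm₂ hl₂] at h
    exact lt_irrefl _ h
  · simp only [Nonconstant, not_forall, not_not] at hYn
    obtain ⟨y, hy⟩ := hYn
    have h0 := hbound Z hZm rfl 0
    have h1 : ∫ ω, X ω * Y ω ∂P = (∫ ω, X ω ∂P) * y := by
      rw [← integral_mul_const]
      exact integral_congr_ae (hy.mono fun ω h => by simp only [h])
    have h2 : ∫ ω, Y ω ∂P = y := by
      rw [integral_congr_ae hy]
      simp
    rw [h2] at h0
    linarith

lemma IsAtomless.exists_nonconstant_indicator [IsProbabilityMeasure P] (hP : IsAtomless P) :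
    ∃ Z : Ω → ℝ, MemLinf P Z ∧ Nonconstant P Z ∧ ∫ ω, Z ω ∂P ≠ 0 := by
  obtain ⟨A, hA, -, hA0, hA1⟩ := hP univ MeasurableSet.univ (by simp)
  rw [measure_univ] at hA1
  refine ⟨A.indicator 1, ⟨measurable_one.indicator hA, 1, ?_⟩, fun c hc => ?_, ?_⟩
  · refine Filter.Eventually.of_forall fun ω => ?_
    by_cases h : ω ∈ A <;> simp [h]
  · have hex : ∀ S : Set Ω, P S ≠ 0 → ∃ ω ∈ S, A.indicator 1 ω = c := by
      intro S hS
      by_contra! hno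
      exact hS (measure_mono_null (fun ω hω => hno ω hω) hc)
    obtain ⟨ω₁, h₁, e₁⟩ := hex A hA0.ne'
    obtain ⟨ω₂, h₂, e₂⟩ := hex Aᶜ (by
      rw [Ne, prob_compl_eq_zero_iff hA]
      exact hA1.ne)
    rw [indicator_of_mem h₁] at e₁
    rw [indicator_of_notMem h₂] at e₂
    simp [← e₁] at e₂
  · rw [integral_indicator_one hA]
    exact (ENNReal.toReal_pos hA0.ne' (by finiteness)).ne'

end Functional

/-- affine collapse to the mean for proper, quasiconvex,
`σ(𝒳,𝒳*)`-lower semicontinuous, law-invariant functionals: three equivalent conditions. -/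
theorem collapse_affine_quasiconvex
    (P : Measure Ω) [IsProbabilityMeasure P] (hP : IsAtomless P)
    (pr : PairedSpaces P) (φ : (Ω → ℝ) → EReal)
    (hbot : ∀ X ∈ pr.carrier, φ X ≠ (⊥ : EReal))
    (hproper : ∃ X ∈ pr.carrier, φ X ≠ (⊤ : EReal))
    (hqc : QuasiconvexFn pr.carrier φ)
    (hlsc : WeakLSC P pr φ)
    (hlaw : LawInvariantFn P pr.carrier φ) :
    [ (∃ a b : ℝ, ∀ X ∈ pr.carrier, φ X = ((a * (∫ ω, X ω ∂P) + b : ℝ) : EReal)),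
      (∃ a : ℝ, ∃ Z ∈ pr.carrier, Nonconstant P Z ∧ (∫ ω, Z ω ∂P) ≠ 0 ∧
        ∀ X ∈ pr.carrier, ∀ t : ℝ,
          φ (fun ω => X ω + t * Z ω) = φ X + ((a * t : ℝ) : EReal)),
      (∃ a : ℝ, ∃ Z ∈ pr.carrier, Nonconstant P Z ∧ (∫ ω, Z ω ∂P) ≠ 0 ∧
        ∀ x t : ℝ,
          φ (fun ω => x + t * Z ω) = φ (fun _ => x) + ((a * t : ℝ) : EReal)) ].TFAE := by
  tfae_have 1 → 2 := by
    rintro ⟨a, b, hab⟩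
    obtain ⟨Z, hZb, hZn, hZ0⟩ := hP.exists_nonconstant_indicator
    have hZ := pr.linf_carrier Z hZb
    refine ⟨a * ∫ ω, Z ω ∂P, Z, hZ, hZn, hZ0, fun X hX t => ?_⟩
    rw [hab _ (pr.add_carrier X hX _ (pr.smul_carrier Z hZ t)), hab X hX,
      integral_add (pr.int_carrier X hX) ((pr.int_carrier Z hZ).const_mul t),
      integral_const_mul, ← EReal.coe_add]
    congr 1
    ring
  tfae_have 2 → 3 := by
    rintro ⟨a, Z, hZ, hZn, hZ0, h⟩
    exact ⟨a, Z, hZ, hZn, hZ0, fun x t => h _ (pr.const_mem x) t⟩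
  tfae_have 3 → 1 := by
    rintro ⟨a, Z, hZ, hZn, hZ0, h⟩
    set z := ∫ ω, Z ω ∂P with hz
    have hmean : ∀ X ∈ pr.carrier, φ (fun _ => ∫ ω, X ω ∂P) ≤ φ X :=
      fun X hX => apply_integral_le hP hbot hqc hlsc hlaw hX
    have hle : ∀ x t : ℝ, φ (fun _ => x + t * z) ≤ φ (fun _ => x) + ((a * t : ℝ) : EReal) := by
      intro x t
      have hmem : (fun ω => x + t * Z ω) ∈ pr.carrier :=
        pr.add_carrier _ (pr.const_mem x) _ (pr.smul_carrier Z hZ t)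
      have h1 := hmean _ hmem
      rw [integral_add (integrable_const x) ((pr.int_carrier Z hZ).const_mul t),
        integral_const_mul, integral_const, probReal_univ, one_smul, ← hz] at h1
      exact h1.trans (h x t).le
    obtain ⟨X₀, hX₀, hX₀t⟩ := hproper
    have hfin : ∀ x : ℝ, φ (fun _ => x) ≠ ⊤ := by
      intro x hx
      have h1 := hle (∫ ω, X₀ ω ∂P) ((x - ∫ ω, X₀ ω ∂P) / z)
      rw [div_mul_cancel₀ _ hZ0, add_sub_cancel, hx, top_le_iff] at h1
      have h2 : φ (fun _ => ∫ ω, X₀ ω ∂P) ≠ ⊤ :=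
        ((hmean X₀ hX₀).trans_lt (lt_top_iff_ne_top.2 hX₀t)).ne
      exact EReal.add_ne_top h2 (EReal.coe_ne_top _) h1
    have hcoe : ∀ x : ℝ, (((φ fun _ => x).toReal : ℝ) : EReal) = φ fun _ => x := fun x =>
      EReal.coe_toReal (hfin x) (hbot _ (pr.const_mem x))
    set f : ℝ → ℝ := fun x => (φ fun _ => x).toReal with hf
    have hfle : ∀ x t : ℝ, f (x + t * z) ≤ f x + a * t := by
      intro x t
      have h1 := hle x t
      rw [← hcoe, ← hcoe x, ← EReal.coe_add] at h1
      exact EReal.coe_le_coe_iff.1 h1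
    -- applying `hfle` along `t` and `-t` turns the inequality into an equality
    have hfeq : ∀ x, f x = a / z * x + f 0 := by
      intro x
      have h1 := hfle 0 (x / z)
      have h2 := hfle x (-(x / z))
      rw [div_mul_cancel₀ _ hZ0, zero_add] at h1
      rw [neg_mul, div_mul_cancel₀ _ hZ0, add_neg_cancel] at h2
      have e : a / z * x = a * (x / z) := by ring
      linarith
    refine ⟨a / z, f 0, fun X hX => le_antisymm ?_ ?_⟩
    · refine apply_le_of_line hP hqc hlsc hlaw hZ hZn hX _ fun t => ?_
      rw [h, ← hcoe, ← EReal.coe_add, EReal.coe_le_coe_iff]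
      change f _ + _ ≤ _
      rw [hfeq, ← hz]
      apply le_of_eq
      field_simp
      ring
    · rw [← hfeq]
      exact (hcoe _).le.trans (hmean X hX)
  tfae_finish

end Collapse
end
end

section
/- Let φ : L^∞ → ℝ be a consistent risk measure. Then there exists a unique σ(X, X*)-lower semicontinuous consistent risk measure φ̄ : X → (−∞, ∞] whose restriction to L^∞ equals φ. -/
/-! The extension is `ψ(X) = sup {φ(Z) : Z bounded, Z dominated by X}` (`bddSup`). Consistency, cash
additivity and agreement with `φ` on bounded variables follow from transitivity, translation
invariance and reflexivity of second-order dominance.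

Lower semicontinuity. Averaging `X` over a finite partition gives a bounded variable dominated by `X`
(`ssd_finCondExp`, Jensen). Conversely, if `Z` is bounded and dominated by `X`, then for each `ε > 0`
the variable `Z - ε` is dominated by the average of `X` over a suitable finite partition
(`exists_partition`). Hence `ψ(X) ≤ m` holds exactly when `φ ≤ m` at the averages of `X` over all
finite partitions. Such an average depends weakly continuously on `X`, through finitely many pairings
with indicators, and `φ` is Lipschitz for the uniform norm, so that the sublevel sets of `ψ` are
intersections of weakly closed sets (`weakLSC_bddSup`).

Uniqueness. Any consistent extension is at least `ψ`. For the converse, let `k = E[X]`, so that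
`P(X ≥ k) > 0`. Cap `X` at `N`, reset it to `k` where `X < -N`, and subtract the constant
`E[(k - X); X < -N] / P(X ≥ k)`. Comparing slopes of a convex test function at `k` shows that the
resulting bounded variable is dominated by `X` (`ssd_resetTrunc`). As `N → ∞` these variables converge
to `X` weakly, by dominated convergence, and `φ` is at most `ψ(X)` at each of them. So every lower
semicontinuous extension is at most `ψ(X)` at `X` (`le_bddSup_of_weakLSC`). -/

open MeasureTheory Set List
open scoped ENNReal NNReal

noncomputable section

namespace Collapse

variable {Ω : Type*} [MeasurableSpace Ω]

/-! ### Supporting lines of convex functions on the line -/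

lemma exists_subgradient {f : ℝ → ℝ} (hf : ConvexOn ℝ Set.univ f) :
    ∃ c : ℝ → ℝ, Monotone c ∧ ∀ x y, f x + c x * (y - x) ≤ f y := by
  have key : ∀ x y, f x + derivWithin f (Ioi x) x * (y - x) ≤ f y := by
    intro x y
    have hx : x ∈ interior (Set.univ : Set ℝ) := by simp
    rcases lt_trichotomy x y with h | h | h
    · have := hf.rightDeriv_le_slope_of_mem_interior hx (mem_univ y) h
      rw [slope_def_field, le_div_iff₀ (by linarith)] at this
      linarith
    · subst h; simp
    · have h1 := hf.slope_le_leftDeriv_of_mem_interior (mem_univ y) hx h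
      have h2 := h1.trans (hf.leftDeriv_le_rightDeriv_of_mem_interior hx)
      rw [slope_def_field, div_le_iff₀ (by linarith)] at h2
      linarith
  refine ⟨fun x => derivWithin f (Ioi x) x, ?_, key⟩
  intro x y hxy
  rcases hxy.eq_or_lt with h | h
  · subst h; rfl
  · have h1 := key x y
    have h2 := key y x
    show derivWithin f (Ioi x) x ≤ derivWithin f (Ioi y) y
    by_contra! hc
    nlinarith [mul_pos (sub_pos.2 hc) (sub_pos.2 h)]

lemma subgradient_nonneg {f c : ℝ → ℝ} (hf : Monotone f)
    (hc : ∀ x y, f x + c x * (y - x) ≤ f y) (x : ℝ) : 0 ≤ c x := by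
  have h1 := hc x (x - 1)
  have h2 := hf (show x - 1 ≤ x by linarith)
  linarith

/-- A nondecreasing convex function can be replaced, outside an interval `[a, b]`, by its supporting
lines at the endpoints. -/
lemma exists_affine_tails {f : ℝ → ℝ} (hm : Monotone f) (hf : ConvexOn ℝ Set.univ f)
    {a b : ℝ} (hab : a ≤ b) :
    ∃ (g : ℝ → ℝ) (ca cb : ℝ), Monotone g ∧ ConvexOn ℝ Set.univ g ∧ (∀ x, g x ≤ f x) ∧
      (∀ x ∈ Set.Icc a b, g x = f x) ∧
      (∀ x ≤ a, g x = f a + ca * (x - a)) ∧ (∀ x, b ≤ x → g x = f b + cb * (x - b)) := by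
  obtain ⟨c, hcm, hc⟩ := exists_subgradient hf
  have hc0 := subgradient_nonneg hm hc
  let cl : ℝ → ℝ := fun x => max a (min x b)
  let g : ℝ → ℝ := fun x => f (cl x) + c (cl x) * (x - cl x)
  have hmid : ∀ x, a ≤ x → x ≤ b → cl x = x := fun x h1 h2 => by simp [cl, h1, h2]
  have hlow : ∀ x, x ≤ a → cl x = a := fun x h => by simp [cl, h]
  have hupp : ∀ x, b ≤ x → cl x = b := fun x h => by simp [cl, h, hab]
  -- the slope at `x` is that of a line supporting `g` at `x`
  have hsup : ∀ x z, g x + c (cl x) * (z - x) ≤ g z := by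
    intro x z
    have h1 := hc (cl x) (cl z)
    have hxa : a ≤ cl x := le_max_left _ _
    have hxb : cl x ≤ b := max_le hab (min_le_right _ _)
    have h2 : 0 ≤ (c (cl z) - c (cl x)) * (z - cl z) := by
      rcases le_total z a with h | h
      · rw [hlow z h]
        exact mul_nonneg_of_nonpos_of_nonpos (sub_nonpos.2 (hcm hxa)) (by linarith)
      · rcases le_total z b with h' | h'
        · rw [hmid z h h']; simp
        · rw [hupp z h']
          exact mul_nonneg (sub_nonneg.2 (hcm hxb)) (by linarith)
    simp only [g]
    nlinarith
  refine ⟨g, c a, c b, ?_, ⟨convex_univ, ?_⟩, ?_, ?_, ?_, ?_⟩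
  · intro x z hxz
    have := hsup x z
    have h0 := mul_nonneg (hc0 (cl x)) (sub_nonneg.2 hxz)
    linarith
  · intro x _ y _ α β hα hβ hαβ
    simp only [smul_eq_mul]
    have h1 := mul_le_mul_of_nonneg_left (hsup (α * x + β * y) x) hα
    have h2 := mul_le_mul_of_nonneg_left (hsup (α * x + β * y) y) hβ
    have h3 : β = 1 - α := by linarith
    subst h3
    nlinarith
  · intro x; exact hc (cl x) x
  · intro x hx; simp [g, hmid x hx.1 hx.2]
  · intro x hx; simp [g, hlow x hx]
  · intro x hx; simp [g, hupp x hx]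

/-! ### Extended expectations and stochastic dominance -/

lemma eExp_mono {P : Measure Ω} {Z Z' : Ω → ℝ} (h : ∀ᵐ ω ∂P, Z ω ≤ Z' ω) :
    eExp P Z ≤ eExp P Z' := by
  unfold eExp
  refine EReal.sub_le_sub ?_ ?_
  · refine EReal.coe_ennreal_le_coe_ennreal_iff.2 (lintegral_mono_ae ?_)
    filter_upwards [h] with ω hω using ENNReal.ofReal_le_ofReal hω
  · refine EReal.coe_ennreal_le_coe_ennreal_iff.2 (lintegral_mono_ae ?_)
    filter_upwards [h] with ω hω using ENNReal.ofReal_le_ofReal (by linarith)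

lemma eExp_of_integrable {P : Measure Ω} {Z : Ω → ℝ} (h : Integrable Z P) :
    eExp P Z = ((∫ ω, Z ω ∂P : ℝ) : EReal) := by
  unfold eExp
  have h1 : ∫⁻ ω, ENNReal.ofReal (Z ω) ∂P ≠ ∞ := h.lintegral_lt_top.ne
  have h2 : ∫⁻ ω, ENNReal.ofReal (-(Z ω)) ∂P ≠ ∞ := h.neg.lintegral_lt_top.ne
  rw [integral_eq_lintegral_pos_part_sub_lintegral_neg_part h, EReal.coe_sub,
    EReal.coe_ennreal_toReal h1, EReal.coe_ennreal_toReal h2]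

lemma SSDdom.of_ae_le {P : Measure Ω} {X Y : Ω → ℝ} (h : ∀ᵐ ω ∂P, Y ω ≤ X ω) :
    SSDdom P X Y := by
  intro f hm _
  refine eExp_mono ?_
  filter_upwards [h] with ω hω using hm hω

lemma SSDdom.trans' {P : Measure Ω} {X Y Z : Ω → ℝ} (h : SSDdom P X Y) (h' : SSDdom P Y Z) :
    SSDdom P X Z :=
  fun f hm hf => (h' f hm hf).trans (h f hm hf)

lemma convexOn_shift {f : ℝ → ℝ} (hf : ConvexOn ℝ Set.univ f) (m : ℝ) :
    ConvexOn ℝ Set.univ (fun x => f (x + m)) := by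
  have := hf.translate_left m
  simpa [Function.comp_def] using this

lemma SSDdom.add_const {P : Measure Ω} {X Y : Ω → ℝ} (h : SSDdom P X Y) (m : ℝ) :
    SSDdom P (fun ω => X ω + m) (fun ω => Y ω + m) :=
  fun f hm hf => h (fun x => f (x + m)) (fun x y hxy => hm (by linarith)) (convexOn_shift hf m)

lemma MemLinf.add_const {P : Measure Ω} {X : Ω → ℝ} (h : MemLinf P X) (m : ℝ) :
    MemLinf P (fun ω => X ω + m) := by
  obtain ⟨hX, M, hM⟩ := h
  refine ⟨hX.add_const m, M + |m|, ?_⟩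
  filter_upwards [hM] with ω hω
  exact (abs_add_le _ _).trans (by linarith)

/-! ### Averages over finite partitions -/

/-- The mean of `X` over the cell `{j = i}` of the partition given by `j`; it is `0` if that cell is
null. -/
def cellMean {n : ℕ} (P : Measure Ω) (X : Ω → ℝ) (j : Ω → Fin n) (i : Fin n) : ℝ :=
  (∫ ω in j ⁻¹' {i}, X ω ∂P) / P.real (j ⁻¹' {i})

/-- The conditional expectation of `X` given the finite partition `{j = i}`, `i : Fin n`. -/
def finCondExp {n : ℕ} (P : Measure Ω) (X : Ω → ℝ) (j : Ω → Fin n) (ω : Ω) : ℝ :=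
  cellMean P X j (j ω)

lemma memLinf_fin {P : Measure Ω} {n : ℕ} {j : Ω → Fin n} (hj : Measurable j) (h : Fin n → ℝ) :
    MemLinf P (fun ω => h (j ω)) := by
  refine ⟨(measurable_of_countable h).comp hj, ∑ i, |h i|, Filter.Eventually.of_forall ?_⟩
  intro ω
  exact Finset.single_le_sum (f := fun i => |h i|) (fun i _ => abs_nonneg _) (Finset.mem_univ _)

lemma MemLinf.integrable {P : Measure Ω} [IsProbabilityMeasure P] {X : Ω → ℝ} (h : MemLinf P X) :
    Integrable X P := by
  obtain ⟨hX, M, hM⟩ := h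
  exact Integrable.of_bound hX.aestronglyMeasurable M (by simpa using hM)

/-- `X` minus its average over the partition has integral zero against every step function of the
partition. -/
lemma integral_step_mul {P : Measure Ω} [IsProbabilityMeasure P] {X : Ω → ℝ} (hX : Integrable X P)
    {n : ℕ} {j : Ω → Fin n} (hj : Measurable j) (s : Fin n → ℝ) :
    Integrable (fun ω => s (j ω) * (X ω - finCondExp P X j ω)) P ∧
      ∫ ω, s (j ω) * (X ω - finCondExp P X j ω) ∂P = 0 := by
  have hms : ∀ i, MeasurableSet (j ⁻¹' {i}) := fun i => hj (measurableSet_singleton i)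
  have heq : (fun ω => s (j ω) * (X ω - finCondExp P X j ω)) =
      fun ω => ∑ i, (j ⁻¹' {i}).indicator (fun ω => s i * (X ω - cellMean P X j i)) ω := by
    funext ω
    rw [Finset.sum_eq_single (j ω)]
    · simp [finCondExp]
    · intro i _ hi
      exact indicator_of_notMem (by simpa using fun h => hi h.symm) _
    · simp
  have hint : ∀ i, Integrable (fun ω => s i * (X ω - cellMean P X j i)) P :=
    fun i => (hX.sub (integrable_const _)).const_mul _
  rw [heq]
  refine ⟨integrable_finsetSum _ fun i _ => (hint i).indicator (hms i), ?_⟩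
  rw [integral_finsetSum _ fun i _ => (hint i).indicator (hms i)]
  refine Finset.sum_eq_zero fun i _ => ?_
  rw [integral_indicator (hms i), integral_const_mul,
    integral_sub hX.integrableOn (integrable_const _)]
  simp only [integral_const, smul_eq_mul, measureReal_restrict_apply_univ]
  by_cases h0 : P.real (j ⁻¹' {i}) = 0
  · have h0' : P (j ⁻¹' {i}) = 0 := by simpa [Measure.real, ENNReal.toReal_eq_zero_iff] using h0
    rw [h0, setIntegral_measure_zero _ h0']; simp
  · unfold cellMean
    field_simp
    simp

/-- Jensen: averaging over a finite partition decreases in second-order dominance. -/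
lemma ssd_finCondExp {P : Measure Ω} [IsProbabilityMeasure P] {X : Ω → ℝ} (hX : Integrable X P)
    {n : ℕ} {j : Ω → Fin n} (hj : Measurable j) : SSDdom P X (finCondExp P X j) := by
  intro f hm hf
  obtain ⟨c, -, hc⟩ := exists_subgradient hf
  obtain ⟨h1, h2⟩ := integral_step_mul hX hj (fun i => c (cellMean P X j i))
  have h3 : Integrable (fun ω => f (finCondExp P X j ω)) P :=
    (memLinf_fin hj (fun i => f (cellMean P X j i))).integrable
  have h4 : Integrable (fun ω => f (finCondExp P X j ω) +
      c (cellMean P X j (j ω)) * (X ω - finCondExp P X j ω)) P := h3.add h1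
  rw [eExp_of_integrable h3]
  calc ((∫ ω, f (finCondExp P X j ω) ∂P : ℝ) : EReal)
      = eExp P (fun ω => f (finCondExp P X j ω) +
          c (cellMean P X j (j ω)) * (X ω - finCondExp P X j ω)) := by
        rw [eExp_of_integrable h4, integral_add h3 h1, h2, add_zero]
    _ ≤ _ := eExp_mono (Filter.Eventually.of_forall fun ω => hc _ _)

lemma ae_cell_pos {P : Measure Ω} {n : ℕ} (j : Ω → Fin n) :
    ∀ᵐ ω ∂P, P (j ⁻¹' {j ω}) ≠ 0 := by
  have : ∀ᵐ ω ∂P, ∀ i, P (j ⁻¹' {i}) = 0 → ω ∉ j ⁻¹' {i} := by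
    rw [ae_all_iff]
    intro i
    by_cases h : P (j ⁻¹' {i}) = 0
    · filter_upwards [measure_eq_zero_iff_ae_notMem.1 h] with ω hω _ using hω
    · exact Filter.Eventually.of_forall fun ω h' => absurd h' h
  filter_upwards [this] with ω hω h using hω _ h rfl

lemma le_cellMean {P : Measure Ω} [IsProbabilityMeasure P] {X : Ω → ℝ} (hX : Integrable X P)
    {n : ℕ} {j : Ω → Fin n} (hj : Measurable j) {i : Fin n} (hi : P (j ⁻¹' {i}) ≠ 0) {x : ℝ}
    (h : ∀ ω, j ω = i → x ≤ X ω) : x ≤ cellMean P X j i := by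
  have hpos : 0 < P.real (j ⁻¹' {i}) := ENNReal.toReal_pos hi (measure_ne_top _ _)
  unfold cellMean
  rw [le_div_iff₀ hpos]
  have := setIntegral_mono_on (integrable_const x).integrableOn hX.integrableOn
    (hj (measurableSet_singleton i)) (fun ω hω => h ω hω)
  simpa [mul_comm] using this

lemma cellMean_le {P : Measure Ω} [IsProbabilityMeasure P] {X : Ω → ℝ} (hX : Integrable X P)
    {n : ℕ} {j : Ω → Fin n} (hj : Measurable j) {i : Fin n} (hi : P (j ⁻¹' {i}) ≠ 0) {x : ℝ}
    (h : ∀ ω, j ω = i → X ω ≤ x) : cellMean P X j i ≤ x := by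
  have hpos : 0 < P.real (j ⁻¹' {i}) := ENNReal.toReal_pos hi (measure_ne_top _ _)
  unfold cellMean
  rw [div_le_iff₀ hpos]
  have := setIntegral_mono_on hX.integrableOn (integrable_const x).integrableOn
    (hj (measurableSet_singleton i)) (fun ω hω => h ω hω)
  simpa [mul_comm] using this

/-- A bounded variable dominated by `X` is, up to an arbitrarily small constant, dominated by the
average of `X` over a finite partition. The partition cuts the range of `X` into two half-lines and
short intervals between them; test functions may be assumed affine on the half-lines, so that only
the short intervals contribute an error. -/
lemma exists_partition {P : Measure Ω} [IsProbabilityMeasure P] {X Z : Ω → ℝ}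
    (hXm : Measurable X) (hX : Integrable X P) (hZ : MemLinf P Z) (h : SSDdom P X Z)
    {ε : ℝ} (hε : 0 < ε) :
    ∃ (n : ℕ) (j : Ω → Fin n), Measurable j ∧
      SSDdom P (finCondExp P X j) (fun ω => Z ω + -ε) := by
  obtain ⟨-, M, hM⟩ := hZ
  set N : ℝ := |M| + 2 * ε with hN
  set K : ℕ := ⌈2 * N / ε⌉₊ with hK
  have hN0 : 0 < N := by positivity
  have hKε : 2 * N ≤ K * ε := by
    have := Nat.le_ceil (2 * N / ε)
    rwa [div_le_iff₀ hε] at this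
  have hK0 : K ≠ 0 := by
    intro h0
    rw [h0] at hKε
    simp at hKε
    linarith
  have hK1 : (1 : ℝ) ≤ K := by exact_mod_cast Nat.one_le_iff_ne_zero.2 hK0
  let j : Ω → Fin (K + 1) := fun ω => ⟨min ⌊(X ω + N) / ε⌋₊ K, by omega⟩
  have hj : Measurable j :=
    (measurable_of_countable (fun k : ℕ => (⟨min k K, by omega⟩ : Fin (K + 1)))).comp
      (Nat.measurable_floor.comp ((hXm.add_const N).div_const ε))
  refine ⟨K + 1, j, hj, ?_⟩
  intro f hm hf
  set a : ℝ := -N + ε with ha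
  set b : ℝ := -N + K * ε with hb
  have hab : a ≤ b := by nlinarith
  obtain ⟨g, ca, cb, hgm, hg, hgf, hgmid, hga, hgb⟩ := exists_affine_tails hm hf hab
  let s : Fin (K + 1) → ℝ := fun i => if i.val = 0 then ca else if i.val = K then cb else 0
  obtain ⟨h1, h2⟩ := integral_step_mul hX hj s
  have h3 : Integrable (fun ω => g (finCondExp P X j ω)) P :=
    (memLinf_fin hj (fun i => g (cellMean P X j i))).integrable
  have h4 : Integrable (fun ω => g (finCondExp P X j ω) +
      s (j ω) * (X ω - finCondExp P X j ω)) P := h3.add h1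
  have hjv : ∀ ω, (j ω).val = min ⌊(X ω + N) / ε⌋₊ K := fun ω => rfl
  have hlow : ∀ ω, (j ω).val = 0 → X ω ≤ a := by
    intro ω hω
    rw [hjv] at hω
    have h0 : ⌊(X ω + N) / ε⌋₊ = 0 := by omega
    rw [Nat.floor_eq_zero, div_lt_iff₀ hε] at h0
    linarith
  have hge : ∀ ω, (j ω).val ≠ 0 → -N + (j ω).val * ε ≤ X ω := by
    intro ω hω
    have h0 : (j ω).val ≤ ⌊(X ω + N) / ε⌋₊ := by rw [hjv]; omega
    rw [Nat.le_floor_iff' hω, le_div_iff₀ hε] at h0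
    linarith
  have hlt : ∀ ω, (j ω).val ≠ K → X ω ≤ -N + ((j ω).val + 1) * ε := by
    intro ω hω
    have h0 : (j ω).val = ⌊(X ω + N) / ε⌋₊ := by rw [hjv] at hω ⊢; omega
    have h5 := Nat.lt_floor_add_one ((X ω + N) / ε)
    rw [← h0, div_lt_iff₀ hε] at h5
    linarith
  have key : ∀ᵐ ω ∂P, g (X ω + -ε) ≤
      g (finCondExp P X j ω) + s (j ω) * (X ω - finCondExp P X j ω) := by
    filter_upwards [ae_cell_pos (P := P) j] with ω hω
    by_cases c0 : (j ω).val = 0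
    · have hmean : finCondExp P X j ω ≤ a :=
        cellMean_le hX hj hω fun ω' hω' => hlow ω' (by rw [hω', c0])
      have hs : s (j ω) = ca := by simp only [s, c0, if_true]
      have hmono := hgm (show X ω + -ε ≤ X ω by linarith)
      rw [hga _ (hlow ω c0)] at hmono
      rw [hs, hga _ hmean]
      linarith
    · by_cases cK : (j ω).val = K
      · have hbX : ∀ ω', j ω' = j ω → b ≤ X ω' := by
          intro ω' hω'
          have := hge ω' (by rw [hω']; exact c0)
          rwa [hω', cK] at this
        have hmean : b ≤ finCondExp P X j ω := le_cellMean hX hj hω hbX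
        have hs : s (j ω) = cb := by simp only [s, cK, hK0, if_true, if_false]
        have hmono := hgm (show X ω + -ε ≤ X ω by linarith)
        rw [hgb _ (hbX ω rfl)] at hmono
        rw [hs, hgb _ hmean]
        linarith
      · have hs : s (j ω) = 0 := by simp only [s, c0, cK, if_false]
        have hmean : -N + (j ω).val * ε ≤ finCondExp P X j ω :=
          le_cellMean hX hj hω fun ω' hω' => by
            have := hge ω' (by rw [hω']; exact c0)
            rwa [hω'] at this
        have := hlt ω cK
        rw [hs, zero_mul, add_zero]
        exact hgm (by linarith)
  calc eExp P (fun ω => f (Z ω + -ε))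
      ≤ eExp P (fun ω => g (Z ω + -ε)) := by
        refine eExp_mono ?_
        filter_upwards [hM] with ω hω
        have h5 := abs_le.1 (hω.trans (le_abs_self M))
        exact (hgmid _ ⟨by linarith, by linarith⟩).ge
    _ ≤ eExp P (fun ω => g (X ω + -ε)) := h.add_const (-ε) g hgm hg
    _ ≤ eExp P (fun ω => g (finCondExp P X j ω) +
          s (j ω) * (X ω - finCondExp P X j ω)) := eExp_mono key
    _ = eExp P (fun ω => g (finCondExp P X j ω)) := by
        rw [eExp_of_integrable h4, integral_add h3 h1, h2, add_zero, eExp_of_integrable h3]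
    _ ≤ eExp P (fun ω => f (finCondExp P X j ω)) :=
        eExp_mono (Filter.Eventually.of_forall fun ω => hgf _)

/-! ### Approximation by bounded dominated variables -/

/-- The variable `X` capped at `N` from above and reset to `k` where it lies below `-N`. -/
def resetTrunc (X : Ω → ℝ) (k N : ℝ) (ω : Ω) : ℝ :=
  if X ω < -N then k else min (X ω) N

/-- The constant compensating, in second-order dominance, for resetting `X` to `k` below `-N`. -/
def resetCost (P : Measure Ω) (X : Ω → ℝ) (k N : ℝ) : ℝ :=
  (∫ ω in {ω | X ω < -N}, (k - X ω) ∂P) / P.real {ω | k ≤ X ω}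

lemma memLinf_resetTrunc {P : Measure Ω} {X : Ω → ℝ} (hXm : Measurable X) {k N : ℝ}
    (hk : |k| ≤ N) : MemLinf P (resetTrunc X k N) := by
  refine ⟨Measurable.ite (measurableSet_lt hXm measurable_const) measurable_const
    (hXm.min measurable_const), N, Filter.Eventually.of_forall fun ω => ?_⟩
  have hk' := abs_le.1 hk
  unfold resetTrunc
  split_ifs with h
  · exact hk
  · exact abs_le.2 ⟨le_min (by linarith) (by linarith), min_le_right _ _⟩

/-- Let `ε` be the reset cost, `F(x) = f(x - ε)`, and `c` a slope of `F` at `k`. Resetting `X` to `k` on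
`A = {X < -N}` raises `E F(X)` by at most `c * E[(k - X); A]`. On the other hand `f ≥ F`, and
`f ≥ F + c * ε` on `[k, ∞)` because slopes only increase to the right of `k`, so passing from `F` to
`f` gains at least `c * ε * P(X ≥ k)`, the same amount. -/
lemma ssd_resetTrunc {P : Measure Ω} [IsProbabilityMeasure P] {X : Ω → ℝ}
    (hXm : Measurable X) (hX : Integrable X P) {k N : ℝ} (hk : |k| ≤ N)
    (hp : 0 < P.real {ω | k ≤ X ω}) :
    SSDdom P X (fun ω => resetTrunc X k N ω + -resetCost P X k N) := by
  intro f hm hf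
  have hk' := abs_le.1 hk
  set A : Set Ω := {ω | X ω < -N} with hA
  set B : Set Ω := {ω | k ≤ X ω} with hB
  have hAm : MeasurableSet A := measurableSet_lt hXm measurable_const
  have hBm : MeasurableSet B := measurableSet_le measurable_const hXm
  set ε : ℝ := resetCost P X k N with hεdef
  have hεp : ε * P.real B = ∫ ω in A, (k - X ω) ∂P := by
    rw [hεdef, resetCost]; exact div_mul_cancel₀ _ hp.ne'
  have hε : 0 ≤ ε := by
    refine div_nonneg (setIntegral_nonneg hAm fun ω hω => ?_) hp.le
    have : X ω < -N := hω
    linarith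
  have hF := convexOn_shift hf (-ε)
  have hFm : Monotone (fun x => f (x + -ε)) := fun x y hxy => hm (by linarith)
  obtain ⟨c, hcm, hc⟩ := exists_subgradient hF
  have hc0 := subgradient_nonneg hFm hc
  have hFf : ∀ x, f (x + -ε) ≤ f x := fun x => hm (by linarith)
  obtain ⟨d, -, hd⟩ := exists_subgradient hf
  -- `f` of the capped variable lies between an affine function of it and the constant `f N`
  have hV : Integrable (fun ω => min (X ω) N) P := hX.inf (integrable_const N)
  have hfV : Integrable (fun ω => f (min (X ω) N)) P := by
    refine integrable_of_le_of_le (hm.measurable.comp (hXm.min measurable_const)).aestronglyMeasurable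
      (g₁ := fun ω => f k + d k * (min (X ω) N - k)) (g₂ := fun _ => f N) ?_ ?_ ?_ ?_
    · exact Filter.Eventually.of_forall fun ω => hd _ _
    · exact Filter.Eventually.of_forall fun ω => hm (min_le_right _ _)
    · exact (integrable_const _).add ((hV.sub (integrable_const _)).const_mul _)
    · exact integrable_const _
  have hiA : Integrable (fun ω => c k * A.indicator (fun ω => k - X ω) ω) P :=
    (((integrable_const k).sub hX).indicator hAm).const_mul _
  have hiB : Integrable (fun ω => c k * B.indicator (fun _ => ε) ω) P :=
    ((integrable_const ε).indicator hBm).const_mul _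
  have hiAB : Integrable (fun ω => c k * A.indicator (fun ω => k - X ω) ω -
      c k * B.indicator (fun _ => ε) ω) P := hiA.sub hiB
  have hzero : ∫ ω, (c k * A.indicator (fun ω => k - X ω) ω -
      c k * B.indicator (fun _ => ε) ω) ∂P = 0 := by
    rw [integral_sub hiA hiB, integral_const_mul, integral_const_mul, integral_indicator hAm,
      integral_indicator hBm, ← hεp]
    simp [mul_comm]
  have hall : Integrable (fun ω => f (min (X ω) N) + (c k * A.indicator (fun ω => k - X ω) ω -
      c k * B.indicator (fun _ => ε) ω)) P := hfV.add hiAB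
  calc eExp P (fun ω => f (resetTrunc X k N ω + -ε))
      ≤ eExp P (fun ω => f (min (X ω) N) + (c k * A.indicator (fun ω => k - X ω) ω -
          c k * B.indicator (fun _ => ε) ω)) := by
        refine eExp_mono (Filter.Eventually.of_forall fun ω => ?_)
        by_cases hωA : X ω < -N
        · have hωB : ω ∉ B := by simp only [hB, mem_ofPred_eq, not_le]; linarith
          rw [indicator_of_mem (show ω ∈ A from hωA), indicator_of_notMem hωB,
            min_eq_left (by linarith), resetTrunc, if_pos hωA]
          have h1 := hc k (X ω)
          have h2 := hFf (X ω)
          linarith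
        · rw [indicator_of_notMem (show ω ∉ A from hωA), resetTrunc, if_neg hωA]
          by_cases hωB : k ≤ X ω
          · rw [indicator_of_mem (show ω ∈ B from hωB)]
            have h1 := hc (min (X ω) N) (min (X ω) N + ε)
            have h2 := hcm (show k ≤ min (X ω) N from le_min hωB (by linarith))
            have h3 := mul_le_mul_of_nonneg_right h2 hε
            simp only [add_neg_cancel_right, add_sub_cancel_left] at h1
            linarith
          · rw [indicator_of_notMem (show ω ∉ B from hωB)]
            have h2 := hFf (min (X ω) N)
            linarith
    _ = eExp P (fun ω => f (min (X ω) N)) := by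
        rw [eExp_of_integrable hall, integral_add hfV hiAB, hzero, add_zero,
          eExp_of_integrable hfV]
    _ ≤ eExp P (fun ω => f (X ω)) :=
        eExp_mono (Filter.Eventually.of_forall fun ω => hm (min_le_left _ _))

lemma tendsto_resetCost {P : Measure Ω} [IsProbabilityMeasure P] {X : Ω → ℝ}
    (hXm : Measurable X) (hX : Integrable X P) (k : ℝ) :
    Filter.Tendsto (fun n : ℕ => resetCost P X k n) Filter.atTop (nhds 0) := by
  have h : Filter.Tendsto (fun n : ℕ => ∫ ω in {ω | X ω < -(n : ℝ)}, (k - X ω) ∂P)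
      Filter.atTop (nhds (∫ ω, (0 : ℝ) ∂P)) := by
    have hm : ∀ n : ℕ, MeasurableSet {ω | X ω < -(n : ℝ)} :=
      fun n => measurableSet_lt hXm measurable_const
    simp_rw [fun n : ℕ => (integral_indicator (f := fun ω => k - X ω) (μ := P) (hm n)).symm]
    refine tendsto_integral_of_dominated_convergence (fun ω => |k - X ω|) (fun n => ?_) ?_
      (fun n => ?_) ?_
    · exact ((measurable_const.sub hXm).indicator (hm n)).aestronglyMeasurable
    · exact ((integrable_const k).sub hX).abs
    · refine Filter.Eventually.of_forall fun ω => ?_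
      exact norm_indicator_le_norm_self (fun ω => k - X ω) ω
    · refine Filter.Eventually.of_forall fun ω => ?_
      obtain ⟨n₀, hn₀⟩ := exists_nat_ge (-X ω)
      refine tendsto_const_nhds.congr' ?_
      filter_upwards [Filter.eventually_ge_atTop n₀] with n hn
      have : (n₀ : ℝ) ≤ n := by exact_mod_cast hn
      refine (indicator_of_notMem ?_ _).symm
      simp only [mem_ofPred_eq, not_lt]
      linarith
  have h2 := h.div_const (P.real {ω | k ≤ X ω})
  simpa [resetCost] using h2

lemma tendsto_integral_resetTrunc {P : Measure Ω} {X Y : Ω → ℝ}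
    (hXm : Measurable X) (hYm : Measurable Y) (hY : Integrable Y P)
    (hXY : Integrable (fun ω => X ω * Y ω) P) (k : ℝ) :
    Filter.Tendsto (fun n : ℕ => ∫ ω, resetTrunc X k n ω * Y ω ∂P) Filter.atTop
      (nhds (∫ ω, X ω * Y ω ∂P)) := by
  refine tendsto_integral_of_dominated_convergence (fun ω => |X ω * Y ω| + |k| * |Y ω|)
    (fun n => ?_) ?_ (fun n => ?_) ?_
  · exact ((Measurable.ite (measurableSet_lt hXm measurable_const) measurable_const
      (hXm.min measurable_const)).mul hYm).aestronglyMeasurable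
  · exact hXY.abs.add (hY.abs.const_mul _)
  · refine Filter.Eventually.of_forall fun ω => ?_
    have h : |resetTrunc X k n ω| ≤ |X ω| + |k| := by
      unfold resetTrunc
      have hn : (0 : ℝ) ≤ n := n.cast_nonneg
      split_ifs with h
      · linarith [abs_nonneg (X ω)]
      · have : |min (X ω) n| ≤ |X ω| := by
          rcases le_total (X ω) n with h' | h'
          · rw [min_eq_left h']
          · rw [min_eq_right h', abs_of_nonneg hn]
            exact h'.trans (le_abs_self _)
        linarith [abs_nonneg k]
    rw [Real.norm_eq_abs, abs_mul, abs_mul, ← add_mul]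
    exact mul_le_mul_of_nonneg_right h (abs_nonneg _)
  · refine Filter.Eventually.of_forall fun ω => ?_
    obtain ⟨n₀, hn₀⟩ := exists_nat_ge |X ω|
    refine tendsto_const_nhds.congr' ?_
    filter_upwards [Filter.eventually_ge_atTop n₀] with n hn
    have h1 : (n₀ : ℝ) ≤ n := by exact_mod_cast hn
    have h2 := abs_le.1 (hn₀.trans h1)
    rw [resetTrunc, if_neg (by linarith), min_eq_left h2.2]

/-! ### The extension -/

/-- The supremum of `φ` over the bounded variables dominated by `X`. -/
def bddSup (P : Measure Ω) (φ : (Ω → ℝ) → ℝ) (X : Ω → ℝ) : EReal :=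
  ⨆ Z : {Z : Ω → ℝ // MemLinf P Z ∧ SSDdom P X Z}, ((φ Z : ℝ) : EReal)

lemma le_bddSup {P : Measure Ω} {φ : (Ω → ℝ) → ℝ} {X Z : Ω → ℝ} (hZ : MemLinf P Z)
    (h : SSDdom P X Z) : ((φ Z : ℝ) : EReal) ≤ bddSup P φ X :=
  le_iSup (fun Z : {Z : Ω → ℝ // MemLinf P Z ∧ SSDdom P X Z} => ((φ Z : ℝ) : EReal)) ⟨Z, hZ, h⟩

lemma bddSup_le {P : Measure Ω} {φ : (Ω → ℝ) → ℝ} {X : Ω → ℝ} {r : EReal}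
    (h : ∀ Z, MemLinf P Z → SSDdom P X Z → ((φ Z : ℝ) : EReal) ≤ r) : bddSup P φ X ≤ r :=
  iSup_le fun Z => h Z Z.2.1 Z.2.2

lemma bddSup_of_memLinf {P : Measure Ω} {φ : (Ω → ℝ) → ℝ}
    (hcons : ∀ X Y : Ω → ℝ, MemLinf P X → MemLinf P Y → SSDdom P X Y → φ Y ≤ φ X)
    {X : Ω → ℝ} (hX : MemLinf P X) : bddSup P φ X = ((φ X : ℝ) : EReal) :=
  le_antisymm (bddSup_le fun Z hZ hd => EReal.coe_le_coe_iff.2 (hcons X Z hX hZ hd))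
    (le_bddSup hX (SSDdom.of_ae_le (Filter.Eventually.of_forall fun _ => le_rfl)))

/-- A consistent cash-additive functional is `1`-Lipschitz for the uniform distance. -/
lemma lipschitz_of_consistent {P : Measure Ω} {φ : (Ω → ℝ) → ℝ}
    (hcash : ∀ X : Ω → ℝ, MemLinf P X → ∀ m : ℝ, φ (fun ω => X ω + m) = φ X + m)
    (hcons : ∀ X Y : Ω → ℝ, MemLinf P X → MemLinf P Y → SSDdom P X Y → φ Y ≤ φ X)
    {X Y : Ω → ℝ} (hX : MemLinf P X) (hY : MemLinf P Y) {d : ℝ} (h : ∀ ω, X ω ≤ Y ω + d) :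
    φ X ≤ φ Y + d := by
  rw [← hcash Y hY d]
  exact hcons _ _ (hY.add_const d) hX (SSDdom.of_ae_le (Filter.Eventually.of_forall h))

/-- A sublevel set of `bddSup` is an intersection of sets defined by finitely many pairings with
indicator functions: `bddSup P φ X ≤ m` if and only if `φ` is at most `m` at the average of `X` over
each finite partition. -/
lemma weakLSC_bddSup {P : Measure Ω} [IsProbabilityMeasure P] (pr : PairedSpaces P)
    {φ : (Ω → ℝ) → ℝ}
    (hcash : ∀ X : Ω → ℝ, MemLinf P X → ∀ m : ℝ, φ (fun ω => X ω + m) = φ X + m)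
    (hcons : ∀ X Y : Ω → ℝ, MemLinf P X → MemLinf P Y → SSDdom P X Y → φ Y ≤ φ X) :
    WeakLSC P pr (bddSup P φ) := by
  intro m
  unfold WeakClosed
  let _ : TopologicalSpace ↥pr.carrier := TopologicalSpace.induced
    (fun X : ↥pr.carrier => (fun Y : ↥pr.dual => ∫ ω, (X : Ω → ℝ) ω * (Y : Ω → ℝ) ω ∂P))
    Pi.topologicalSpace
  have hset : {X : ↥pr.carrier | (X : Ω → ℝ) ∈ {X | X ∈ pr.carrier ∧ bddSup P φ X ≤ (m : EReal)}} =
      ⋂ (n : ℕ), ⋂ (j : {j : Ω → Fin n // Measurable j}),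
        {X : ↥pr.carrier | φ (finCondExp P (X : Ω → ℝ) j.1) ≤ m} := by
    ext X
    have hXm := pr.meas_carrier X X.2
    have hX := pr.int_carrier X X.2
    simp only [mem_iInter]
    constructor
    · rintro ⟨-, h⟩ n ⟨j, hj⟩
      have h1 := le_bddSup (φ := φ) (memLinf_fin hj _) (ssd_finCondExp hX hj)
      exact EReal.coe_le_coe_iff.1 (h1.trans h)
    · intro h
      refine ⟨X.2, bddSup_le fun Z hZ hd => EReal.coe_le_coe_iff.2 ?_⟩
      refine le_of_forall_pos_le_add fun ε hε => ?_
      obtain ⟨n, j, hj, hjd⟩ := exists_partition hXm hX hZ hd hε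
      have h1 := hcons _ _ (memLinf_fin hj _) (hZ.add_const (-ε)) hjd
      have h2 : φ (finCondExp P (X : Ω → ℝ) j) ≤ m := h n ⟨j, hj⟩
      rw [hcash Z hZ] at h1
      have h3 : φ Z + -ε ≤ m := h1.trans h2
      linarith
  change IsClosed {X : ↥pr.carrier |
    (X : Ω → ℝ) ∈ {X | X ∈ pr.carrier ∧ bddSup P φ X ≤ (m : EReal)}}
  rw [hset]
  refine isClosed_iInter fun n => isClosed_iInter fun ⟨j, hj⟩ => ?_
  have hφ : Continuous (fun h : Fin n → ℝ => φ (fun ω => h (j ω))) := by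
    refine LipschitzWith.continuous (K := 1) (LipschitzWith.of_dist_le_mul fun h h' => ?_)
    have hpt : ∀ i, |h i - h' i| ≤ dist h h' := fun i => dist_le_pi_dist h h' i
    have h1 : φ (fun ω => h (j ω)) ≤ φ (fun ω => h' (j ω)) + dist h h' :=
      lipschitz_of_consistent hcash hcons (memLinf_fin hj h) (memLinf_fin hj h')
        fun ω => by linarith [(abs_le.1 (hpt (j ω))).2]
    have h2 : φ (fun ω => h' (j ω)) ≤ φ (fun ω => h (j ω)) + dist h h' :=
      lipschitz_of_consistent hcash hcons (memLinf_fin hj h') (memLinf_fin hj h)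
        fun ω => by linarith [(abs_le.1 (hpt (j ω))).1]
    rw [NNReal.coe_one, one_mul, Real.dist_eq, abs_le]
    constructor <;> linarith
  have hmean : Continuous (fun X : ↥pr.carrier => fun i => cellMean P (X : Ω → ℝ) j i) := by
    refine continuous_pi fun i => ?_
    have hms : MeasurableSet (j ⁻¹' {i}) := hj (measurableSet_singleton i)
    let Y : ↥pr.dual := ⟨(j ⁻¹' {i}).indicator (fun _ => 1), pr.linf_dual _
      ⟨measurable_const.indicator hms, 1, Filter.Eventually.of_forall fun ω => by
        by_cases h : ω ∈ j ⁻¹' {i}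
        · rw [indicator_of_mem h, abs_one]
        · rw [indicator_of_notMem h, abs_zero]; exact zero_le_one⟩⟩
    have h0 : Continuous (fun X : ↥pr.carrier =>
        (fun Y : ↥pr.dual => ∫ ω, (X : Ω → ℝ) ω * (Y : Ω → ℝ) ω ∂P)) := continuous_induced_dom
    have h1 : Continuous (fun X : ↥pr.carrier => ∫ ω, (X : Ω → ℝ) ω * (Y : Ω → ℝ) ω ∂P) :=
      continuous_pi_iff.1 h0 Y
    have h2 : (fun X : ↥pr.carrier => cellMean P (X : Ω → ℝ) j i) =
        fun X : ↥pr.carrier => (∫ ω, (X : Ω → ℝ) ω * (Y : Ω → ℝ) ω ∂P) / P.real (j ⁻¹' {i}) := by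
      funext X
      unfold cellMean
      rw [← integral_indicator hms]
      congr 2
      funext ω
      by_cases h : ω ∈ j ⁻¹' {i}
      · simp only [Y, indicator_of_mem h, mul_one]
      · simp only [Y, indicator_of_notMem h, mul_zero]
    rw [h2]
    exact h1.div_const _
  exact isClosed_le (hφ.comp hmean) continuous_const

/-- A lower semicontinuous extension is at most `bddSup`: the bounded variables
`resetTrunc X k n - resetCost P X k n` are dominated by `X` and converge weakly to `X`. -/
lemma le_bddSup_of_weakLSC {P : Measure Ω} [IsProbabilityMeasure P] (pr : PairedSpaces P)
    {φ : (Ω → ℝ) → ℝ} {ψ' : (Ω → ℝ) → EReal} (hlsc : WeakLSC P pr ψ')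
    (hext : ∀ X : Ω → ℝ, MemLinf P X → ψ' X = ((φ X : ℝ) : EReal))
    {X : Ω → ℝ} (hX : X ∈ pr.carrier) : ψ' X ≤ bddSup P φ X := by
  have hXm := pr.meas_carrier X hX
  have hXi := pr.int_carrier X hX
  refine EReal.le_of_forall_lt_iff_le.1 fun m hm => ?_
  have hclosed := hlsc m
  unfold WeakClosed at hclosed
  let _ : TopologicalSpace ↥pr.carrier := TopologicalSpace.induced
    (fun X : ↥pr.carrier => (fun Y : ↥pr.dual => ∫ ω, (X : Ω → ℝ) ω * (Y : Ω → ℝ) ω ∂P))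
    Pi.topologicalSpace
  set k : ℝ := ∫ ω, X ω ∂P with hk
  have hp : 0 < P.real {ω | k ≤ X ω} :=
    ENNReal.toReal_pos (measure_integral_le_pos hXi).ne' (measure_ne_top _ _)
  obtain ⟨n₀, hn₀⟩ := exists_nat_ge |k|
  have hkn : ∀ n : ℕ, |k| ≤ ((n + n₀ : ℕ) : ℝ) := fun n => by
    push_cast
    linarith [(n.cast_nonneg : (0 : ℝ) ≤ n)]
  let u : ℕ → Ω → ℝ := fun n ω =>
    resetTrunc X k ((n + n₀ : ℕ) : ℝ) ω + -resetCost P X k ((n + n₀ : ℕ) : ℝ)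
  have hu : ∀ n, MemLinf P (u n) := fun n => (memLinf_resetTrunc hXm (hkn n)).add_const _
  have hud : ∀ n, SSDdom P X (u n) := fun n => ssd_resetTrunc hXm hXi (hkn n) hp
  let U : ℕ → ↥pr.carrier := fun n => ⟨u n, pr.linf_carrier _ (hu n)⟩
  have htend : Filter.Tendsto U Filter.atTop (nhds (⟨X, hX⟩ : ↥pr.carrier)) := by
    rw [nhds_induced, Filter.tendsto_comap_iff, tendsto_pi_nhds]
    intro Y
    have hYi := pr.int_dual Y Y.2
    have hYm := pr.meas_dual Y Y.2
    have h1 := (tendsto_integral_resetTrunc hXm hYm hYi (pr.mul_int X hX Y Y.2) k).comp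
      (Filter.tendsto_add_atTop_nat n₀)
    have h2 := ((tendsto_resetCost hXm hXi k).comp (Filter.tendsto_add_atTop_nat n₀)).mul_const
      (∫ ω, (Y : Ω → ℝ) ω ∂P)
    have h3 := h1.sub h2
    rw [zero_mul, sub_zero] at h3
    refine h3.congr fun n => ?_
    have hW : Integrable (fun ω => resetTrunc X k ((n + n₀ : ℕ) : ℝ) ω * (Y : Ω → ℝ) ω) P :=
      pr.mul_int _ (pr.linf_carrier _ (memLinf_resetTrunc hXm (hkn n))) Y Y.2
    simp only [Function.comp_apply, U, u, add_mul]
    rw [integral_add hW (hYi.const_mul _), integral_const_mul]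
    ring
  have hmem := IsClosed.mem_of_tendsto (b := Filter.atTop) hclosed htend
    (Filter.Eventually.of_forall fun n => ⟨pr.linf_carrier _ (hu n), by
      rw [hext _ (hu n)]
      exact (le_bddSup (hu n) (hud n)).trans hm.le⟩)
  exact hmem.2

/-- every consistent risk measure `φ : L^∞ → ℝ` admits a unique
`σ(𝒳,𝒳*)`-lower semicontinuous consistent risk measure `ψ : 𝒳 → (-∞,∞]` extending it. -/
theorem consistent_unique_extension
    (P : Measure Ω) [IsProbabilityMeasure P] (hP : IsAtomless P)
    (pr : PairedSpaces P) (φ : (Ω → ℝ) → ℝ)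
    (hcash : ∀ X : Ω → ℝ, MemLinf P X → ∀ m : ℝ, φ (fun ω => X ω + m) = φ X + m)
    (hcons : ∀ X Y : Ω → ℝ, MemLinf P X → MemLinf P Y → SSDdom P X Y → φ Y ≤ φ X)
    (hnorm : φ (fun _ => (0:ℝ)) = 0) :
    ∃ ψ : (Ω → ℝ) → EReal,
      (IsConsistentRM P pr.carrier ψ ∧ WeakLSC P pr ψ ∧
        ∀ X : Ω → ℝ, MemLinf P X → ψ X = ((φ X : ℝ) : EReal)) ∧
      ∀ ψ' : (Ω → ℝ) → EReal,
        (IsConsistentRM P pr.carrier ψ' ∧ WeakLSC P pr ψ' ∧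
          ∀ X : Ω → ℝ, MemLinf P X → ψ' X = ((φ X : ℝ) : EReal)) →
        ∀ X ∈ pr.carrier, ψ' X = ψ X := by
  have h0 : MemLinf P (fun _ => (0 : ℝ)) := ⟨measurable_const, 0, by simp⟩
  refine ⟨bddSup P φ, ⟨⟨?_, ?_, ?_, ?_, ?_⟩, ?_, fun X hX => bddSup_of_memLinf hcons hX⟩, ?_⟩
  · intro X hX h
    -- averaging over the trivial partition bounds `bddSup` from below by `φ (E[X])`
    have hj : Measurable (fun _ : Ω => (0 : Fin 1)) := measurable_const
    have h1 := le_bddSup (φ := φ) (memLinf_fin hj _) (ssd_finCondExp (pr.int_carrier X hX) hj)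
    rw [h] at h1
    exact EReal.coe_ne_bot _ (le_bot_iff.1 h1)
  · refine ⟨fun _ => 0, pr.linf_carrier _ h0, ?_⟩
    rw [bddSup_of_memLinf hcons h0]
    exact EReal.coe_ne_top _
  · intro X hX m
    refine le_antisymm (bddSup_le fun Z hZ hd => ?_) ?_
    · have hd' : SSDdom P X (fun ω => Z ω + -m) := by
        simpa using hd.add_const (-m)
      have h1 := le_bddSup (φ := φ) (hZ.add_const (-m)) hd'
      rw [hcash Z hZ (-m)] at h1
      have h2 := add_le_add_left h1 (m : EReal)
      rw [← EReal.coe_add, neg_add_cancel_right] at h2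
      exact h2
    · rw [← EReal.le_sub_iff_add_le (Or.inl (EReal.coe_ne_bot m)) (Or.inl (EReal.coe_ne_top m))]
      refine bddSup_le fun Z hZ hd => ?_
      rw [EReal.le_sub_iff_add_le (Or.inl (EReal.coe_ne_bot m)) (Or.inl (EReal.coe_ne_top m)),
        ← EReal.coe_add, ← hcash Z hZ m]
      exact le_bddSup (hZ.add_const m) (hd.add_const m)
  · intro X _ Y _ hXY
    exact bddSup_le fun Z hZ hd => le_bddSup hZ (hXY.trans' hd)
  · rw [bddSup_of_memLinf hcons h0, hnorm, EReal.coe_zero]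
  · exact weakLSC_bddSup pr hcash hcons
  · rintro ψ' ⟨⟨-, -, -, hcons', -⟩, hlsc, hext⟩ X hX
    refine le_antisymm ?_ (bddSup_le fun Z hZ hd => ?_)
    · exact le_bddSup_of_weakLSC pr hlsc hext hX
    · rw [← hext Z hZ]
      exact hcons' X hX Z (pr.linf_carrier Z hZ) hd

end Collapse
end
end

section
/- Let μ be a JP capacity represented by the pair (ν, α) with α ≠ 1/2. Then μ is law invariant if and only if ν is law invariant. -/
/-!
The values `μ A` and `μ Aᶜ` are affine functions of `ν A` and `ν Aᶜ` whose linear part has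
determinant `α² - (1 - α)² = 2 α - 1`, nonzero for `α ≠ 1/2`. So each pair determines the other.
Since `P A = P B` forces `P Aᶜ = P Bᶜ`, law invariance passes between `μ` and `ν`.
-/

open MeasureTheory Set List
open scoped ENNReal NNReal

noncomputable section

namespace Collapse

variable {Ω : Type*} [MeasurableSpace Ω]

/-- a JP capacity represented by `(ν, α)` with `α ≠ 1/2` is law invariant
if and only if `ν` is law invariant. -/
theorem jp_law_invariant_iff
    (P : Measure Ω) [IsProbabilityMeasure P] (hP : IsAtomless P)
    (μ ν : Capacity Ω) (α : ℝ) (hjp : IsJPRep μ ν α) (hα : α ≠ 1/2) :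
    Capacity.LawInvariant P μ ↔ Capacity.LawInvariant P ν := by
  obtain ⟨-, -, hμ⟩ := hjp
  have hα' : 2 * α - 1 ≠ 0 := fun h => hα (by linarith)
  constructor
  · intro h A B hA hB hAB
    have h₁ := h A B hA hB hAB
    have h₂ := h Aᶜ Bᶜ hA.compl hB.compl
      (by rw [prob_compl_eq_one_sub hA, prob_compl_eq_one_sub hB, hAB])
    rw [hμ A hA, hμ B hB] at h₁
    rw [hμ _ hA.compl, hμ _ hB.compl, compl_compl, compl_compl] at h₂
    -- Eliminating `ν Aᶜ - ν Bᶜ` leaves `(α² - (1 - α)²) (ν A - ν B) = 0`, and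
    -- `α² - (1 - α)² = 2 α - 1`.
    have h₃ : (2 * α - 1) * (ν.toFun A - ν.toFun B) = 0 := by
      linear_combination α * h₁ + (1 - α) * h₂
    exact sub_eq_zero.mp ((mul_eq_zero.mp h₃).resolve_left hα')
  · intro h A B hA hB hAB
    rw [hμ A hA, hμ B hB, h A B hA hB hAB, h Aᶜ Bᶜ hA.compl hB.compl
      (by rw [prob_compl_eq_one_sub hA, prob_compl_eq_one_sub hB, hAB])]

end Collapse
end
end
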